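/- arXiv:math/9809080 — 8 statements merged into one kernel-verified Lean document; each statement's English description precedes it below -/
import Mathlib

section
/- Let u ∈ 𝒜 be a Haar unitary and let p = p* ∈ 𝒜 satisfy φ(p^k) = 0 for every odd k ≥ 1, and assume that the sets {u, u*} and {p} are free with respect to φ. Then b := up satisfies the alternating-word condition, i.e. φ( w_{ī₀ i₁; k₁}(b) · w_{ī₁ i₂; k₂}(b) ⋯ w_{ī_{n−1} iₙ; kₙ}(b) ) = 0 for every n ≥ 1, every i₀, i₁, …, iₙ ∈ {1,2} and every k₁, …, kₙ ≥ 1. (Lemma 3.9, implication 1° ⇒ 2°.) -/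
open scoped BigOperators
open ComplexOrder

noncomputable section

variable {A : Type*} [Ring A] [Algebra ℂ A] [StarRing A]

/-- Freeness of a family of subsets of `T` with respect to a state `φ`:
`φ` vanishes on every alternating product of centered elements, each taken from the
unital subalgebra generated by one of the sets. -/
def AreFree {T : Type*} [Ring T] [Algebra ℂ T] {ι : Type*} (φ : T → ℂ) (S : ι → Set T) :
    Prop :=
  ∀ (n : ℕ) (t : Fin (n + 1) → ι) (z : Fin (n + 1) → T),
    (∀ m, z m ∈ Algebra.adjoin ℂ (S (t m))) →
    (∀ m, φ (z m) = 0) →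
    (∀ m : Fin n, t m.castSucc ≠ t m.succ) →
    φ ((List.ofFn z).prod) = 0

/-- The elements `w_{ij;k}(b)` of Lemma 3.9 (indices shifted: `0 ↔ 1`, `1 ↔ 2`):
`w_{11;k} = (bb*)^k − φ((bb*)^k)·1`, `w_{12;k} = b(b*b)^{k−1}`,
`w_{21;k} = b*(bb*)^{k−1}`, `w_{22;k} = (b*b)^k − φ((b*b)^k)·1`. -/
def wElt (φ : A →ₗ[ℂ] ℂ) (b : A) (i j : Fin 2) (k : ℕ) : A :=
  if i = 0 then
    if j = 0 then (b * star b) ^ k - algebraMap ℂ A (φ ((b * star b) ^ k))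
    else b * (star b * b) ^ (k - 1)
  else
    if j = 0 then star b * (b * star b) ^ (k - 1)
    else (star b * b) ^ k - algebraMap ℂ A (φ ((star b * b) ^ k))

/-- The alternating-word condition (R-diagonality): for every `n ≥ 1`, all
`i₀, …, iₙ ∈ {1,2}` and all `k₁, …, kₙ ≥ 1`,
`φ(w_{ī₀i₁;k₁}(b) ⋯ w_{ī_{n−1}iₙ;kₙ}(b)) = 0`, where `ī = 3 − i`. -/
def AltWordCond (φ : A →ₗ[ℂ] ℂ) (b : A) : Prop :=
  ∀ (n : ℕ), 0 < n → ∀ (i : Fin (n + 1) → Fin 2) (k : Fin n → ℕ), (∀ m, 1 ≤ k m) →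
    φ ((List.ofFn fun m : Fin n =>
        wElt φ b (1 - i m.castSucc) (i m.succ) (k m)).prod) = 0

/-- List form of freeness. -/
theorem AreFree.list_form {φ : A → ℂ} {S : Fin 2 → Set A} (h : AreFree φ S)
    (l : List (Fin 2 × A)) (hne : l ≠ [])
    (hmem : ∀ x ∈ l, x.2 ∈ Algebra.adjoin ℂ (S x.1) ∧ φ x.2 = 0)
    (hc : l.IsChain (fun x y => x.1 ≠ y.1)) : φ (l.map Prod.snd).prod = 0 := by
  obtain ⟨n, hn⟩ : ∃ n, l.length = n + 1 :=
    ⟨l.length - 1, by have := List.length_pos_iff.2 hne; omega⟩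
  have key := h n (fun m => (l[m.1]'(by omega)).1) (fun m => (l[m.1]'(by omega)).2)
    (fun m => (hmem _ (List.getElem_mem _)).1) (fun m => (hmem _ (List.getElem_mem _)).2)
    (fun m => by
      have := List.isChain_iff_getElem.1 hc m.1 (by omega)
      simpa using this)
  have e : List.ofFn (fun m : Fin (n + 1) => (l[m.1]'(by omega)).2) = l.map Prod.snd := by
    apply List.ext_getElem
    · simp [hn]
    · intro a h1 h2
      rw [List.getElem_ofFn, List.getElem_map]
  rwa [e] at key

/-- The left factor. -/
def lFac (u : A) (i : Fin 2) : A := if i = 0 then u else 1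

/-- The right factor. -/
def rFac (u : A) (i : Fin 2) : A := if i = 0 then star u else 1

/-- The middle factor. -/
def mFac (φ : A →ₗ[ℂ] ℂ) (p : A) (i j : Fin 2) (k : ℕ) : A :=
  if i = j then p ^ (2 * k) - algebraMap ℂ A (φ (p ^ (2 * k))) else p ^ (2 * k - 1)

theorem conj_pow_aux (u x : A) (hu : star u * u = 1) (hu' : u * star u = 1) (k : ℕ) :
    (u * x * star u) ^ k = u * x ^ k * star u := by
  induction k with
  | zero => simp [hu']
  | succ k ih =>
    rw [pow_succ, ih, pow_succ]
    calc u * x ^ k * star u * (u * x * star u)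
        = u * x ^ k * (star u * u) * x * star u := by noncomm_ring
      _ = _ := by rw [hu]; noncomm_ring

theorem wElt_factor (φ : A →ₗ[ℂ] ℂ) (hφtr : ∀ x y : A, φ (x * y) = φ (y * x)) (u p : A)
    (hu : star u * u = 1) (hu' : u * star u = 1) (hp : star p = p)
    (i j : Fin 2) (k : ℕ) (hk : 1 ≤ k) :
    wElt φ (u * p) i j k = lFac u i * mFac φ p i j k * rFac u j := by
  obtain ⟨k, rfl⟩ : ∃ q, k = q + 1 := ⟨k - 1, by omega⟩
  have h1 : (u * p) * star (u * p) = u * p ^ 2 * star u := by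
    rw [star_mul, hp, pow_two]; noncomm_ring
  have h2 : star (u * p) * (u * p) = p ^ 2 := by
    rw [star_mul, hp, pow_two, mul_assoc, ← mul_assoc (star u), hu, one_mul]
  have h3 : ∀ x : A, φ (u * x * star u) = φ x := by
    intro x
    rw [hφtr, ← mul_assoc, hu, one_mul]
  have e : 2 * (k + 1) - 1 = 2 * k + 1 := by omega
  unfold wElt lFac mFac rFac
  rw [h1, h2, conj_pow_aux u _ hu hu', conj_pow_aux u _ hu hu', h3, ← pow_mul, ← pow_mul, e,
    Nat.add_sub_cancel]
  fin_cases i <;> fin_cases j <;> simp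
  · rw [mul_sub, sub_mul, ← Algebra.commutes, mul_assoc (algebraMap ℂ A _), hu', mul_one]
  · rw [mul_assoc, pow_succ']
  · rw [hp, ← mul_assoc, ← mul_assoc, mul_assoc p, hu, mul_one, pow_succ']

theorem word_list (φ : A →ₗ[ℂ] ℂ) (hφ1 : φ 1 = 1)
    (hφtr : ∀ x y : A, φ (x * y) = φ (y * x)) (u p : A)
    (hu : star u * u = 1) (hu' : u * star u = 1)
    (hHaar : ∀ n : ℕ, 1 ≤ n → φ (u ^ n) = 0 ∧ φ (star u ^ n) = 0)
    (hp : star p = p) (hodd : ∀ k : ℕ, Odd k → φ (p ^ k) = 0) (n : ℕ) :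
    ∀ (i : Fin (n + 2) → Fin 2) (k : Fin (n + 1) → ℕ), (∀ m, 1 ≤ k m) →
    ∃ (z : A) (l : List (Fin 2 × A)),
      (∀ x ∈ (1, z) :: l, x.2 ∈ Algebra.adjoin ℂ ((![{u, star u}, {p}] : Fin 2 → Set A) x.1)
        ∧ φ x.2 = 0) ∧
      ((1, z) :: l).IsChain (fun x y => x.1 ≠ y.1) ∧
      (List.ofFn fun m : Fin (n + 1) =>
        wElt φ (u * p) (1 - i m.castSucc) (i m.succ) (k m)).prod =
      lFac u (1 - i 0) * (((1, z) :: l).map Prod.snd).prod := by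
  have hP : ∀ (i j : Fin 2) (k : ℕ), 1 ≤ k →
      mFac φ p i j k ∈ Algebra.adjoin ℂ {p} ∧ φ (mFac φ p i j k) = 0 := by
    intro i j k hk
    have hpm : p ∈ Algebra.adjoin ℂ {p} := Algebra.subset_adjoin rfl
    unfold mFac
    split_ifs
    · refine ⟨sub_mem (pow_mem hpm _) (Subalgebra.algebraMap_mem _ _), ?_⟩
      rw [map_sub, Algebra.algebraMap_eq_smul_one, map_smul, hφ1]
      simp
    · exact ⟨pow_mem hpm _, hodd _ ⟨k - 1, by omega⟩⟩
  have hU : u ∈ Algebra.adjoin ℂ {u, star u} ∧ φ u = 0 :=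
    ⟨Algebra.subset_adjoin (by simp), by simpa using (hHaar 1 le_rfl).1⟩
  have hU' : star u ∈ Algebra.adjoin ℂ {u, star u} ∧ φ (star u) = 0 :=
    ⟨Algebra.subset_adjoin (by simp), by simpa using (hHaar 1 le_rfl).2⟩
  have two : ∀ j : Fin 2, j = 0 ∨ j = 1 := by decide
  induction n with
  | zero =>
    intro i k hk
    have hz := hP (1 - i 0) (i 1) (k 0) (hk 0)
    have hw := wElt_factor φ hφtr u p hu hu' hp (1 - i 0) (i 1) (k 0) (hk 0)
    refine ⟨mFac φ p (1 - i 0) (i 1) (k 0), if i 1 = 0 then [(0, star u)] else [], ?_, ?_, ?_⟩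
    · split_ifs <;> simp [hz, hU']
    · split_ifs <;> simp
    · rcases two (i 1) with h | h <;> rw [h] at hw <;> simp [h, hw, rFac, mul_assoc]
  | succ n ih =>
    intro i k hk
    obtain ⟨z, l, h1, h2, h3⟩ := ih (fun m => i m.succ) (fun m => k m.succ) (fun m => hk _)
    have hz := hP (1 - i 0) (i 1) (k 0) (hk 0)
    have hw := wElt_factor φ hφtr u p hu hu' hp (1 - i 0) (i 1) (k 0) (hk 0)
    have hV : rFac u (i 1) * lFac u (1 - i 1) ∈ Algebra.adjoin ℂ {u, star u} ∧
        φ (rFac u (i 1) * lFac u (1 - i 1)) = 0 := by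
      rcases two (i 1) with h | h <;> rw [h] <;> simpa [rFac, lFac] using by assumption
    refine ⟨mFac φ p (1 - i 0) (i 1) (k 0),
      (0, rFac u (i 1) * lFac u (1 - i 1)) :: (1, z) :: l, ?_, ?_, ?_⟩
    · intro x hx
      rcases List.mem_cons.1 hx with rfl | hx
      · simpa using hz
      rcases List.mem_cons.1 hx with rfl | hx
      · simpa using hV
      exact h1 x hx
    · exact List.IsChain.cons_cons (by simp) (List.IsChain.cons_cons (by simp) h2)
    · rw [List.ofFn_succ, List.prod_cons]
      have h3' := h3
      simp only [Fin.succ_zero_eq_one, Fin.castSucc_zero, ← Fin.succ_castSucc] at h3' ⊢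
      rw [h3', hw]
      simp only [List.map_cons, List.prod_cons, mul_assoc]

/-- Lemma 3.9, 1° ⇒ 2°: if `u` is a Haar unitary, `p = p*` has vanishing odd moments,
and `{u, u*}` is free from `{p}`, then `b = up` satisfies the alternating-word condition. -/
theorem haar_unitary_mul_even_satisfies_altWordCond
    (φ : A →ₗ[ℂ] ℂ)
    (hφ1 : φ 1 = 1)
    (hφpos : ∀ x : A, 0 ≤ φ (star x * x))
    (hφtr : ∀ x y : A, φ (x * y) = φ (y * x))
    (u p : A)
    (hu : star u * u = 1) (hu' : u * star u = 1)
    (hHaar : ∀ n : ℕ, 1 ≤ n → φ (u ^ n) = 0 ∧ φ (star u ^ n) = 0)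
    (hp : star p = p)
    (hodd : ∀ k : ℕ, Odd k → φ (p ^ k) = 0)
    (hfree : AreFree (fun x => φ x) (![{u, star u}, {p}] : Fin 2 → Set A)) :
    AltWordCond φ (u * p) := by
  intro n hn i k hk
  obtain ⟨n, rfl⟩ : ∃ q, n = q + 1 := ⟨n - 1, by omega⟩
  obtain ⟨z, l, h1, h2, h3⟩ := word_list φ hφ1 hφtr u p hu hu' hHaar hp hodd n i k hk
  rw [h3]
  unfold lFac
  split_ifs
  · have := hfree.list_form ((0, u) :: (1, z) :: l) (by simp) (by
      intro x hx
      rcases List.mem_cons.1 hx with rfl | hx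
      · exact ⟨Algebra.subset_adjoin (by simp), by simpa using (hHaar 1 le_rfl).1⟩
      · exact h1 x hx) (List.IsChain.cons_cons (by simp) h2)
    simpa using this
  · rw [one_mul]
    exact hfree.list_form _ (by simp) h1 h2
end
end

section
/- Let (𝒜, φ) and (𝒜′, φ′) be unital complex *-algebras each equipped with a tracial state, and let b ∈ 𝒜 and c ∈ 𝒜′ both satisfy the alternating-word condition (with respect to φ and φ′ respectively). If φ((b*b)^k) = φ′((c*c)^k) for every k ≥ 1, then b and c have the same *-distribution: for every n ≥ 1 and every ε₁, …, εₙ ∈ {1, *}, φ(b^{ε₁} b^{ε₂} ⋯ b^{εₙ}) = φ′(c^{ε₁} c^{ε₂} ⋯ c^{εₙ}), where x^1 := x and x^* is the adjoint of x. (Lemma 3.9, implication 2° ⇒ 1°: the alternating-word condition together with the distribution of b*b determines the *-distribution of b.) -/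
open scoped BigOperators
open ComplexOrder

noncomputable section

/-- Selection: index `0` gives `x`, index `1` gives `star x`. -/
def sel {T : Type*} [Star T] (x : T) (i : Fin 2) : T := if i = 0 then x else star x

variable {A : Type*} [Ring A] [Algebra ℂ A] [StarRing A]

/-- The product of `w`-elements encoded by a start index and a list of (end index, exponent). -/
def wList (φ : A →ₗ[ℂ] ℂ) (b : A) : Fin 2 → List (Fin 2 × ℕ) → A
  | _, [] => 1
  | s, p :: L => wElt φ b s p.1 p.2 * wList φ b (1 - p.1) L

theorem fin2_sub_sub (s : Fin 2) : 1 - (1 - s) = s := by fin_cases s <;> rfl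

theorem wList_eq_ofFn (φ : A →ₗ[ℂ] ℂ) (b : A) (L : List (Fin 2 × ℕ)) :
    ∀ s, (∀ p ∈ L, 1 ≤ p.2) → ∃ (i : Fin (L.length + 1) → Fin 2) (k : Fin L.length → ℕ),
      (∀ m, 1 ≤ k m) ∧ i 0 = 1 - s ∧
      (List.ofFn fun m : Fin L.length =>
        wElt φ b (1 - i m.castSucc) (i m.succ) (k m)).prod = wList φ b s L := by
  induction L with
  | nil => exact fun s _ => ⟨fun _ => 1 - s, fun _ => 1, fun _ => le_rfl, rfl, by simp [wList]⟩
  | cons p L ih =>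
    intro s hL
    obtain ⟨i, k, hk, hi, h⟩ := ih (1 - p.1) (fun q hq => hL q (List.mem_cons_of_mem _ hq))
    rw [fin2_sub_sub] at hi
    refine ⟨Fin.cons (1 - s) i, Fin.cons p.2 k, ?_, rfl, ?_⟩
    · intro m
      refine Fin.cases ?_ ?_ m
      · exact hL p (List.mem_cons_self)
      · intro m; exact hk m
    · have e : (List.ofFn fun m : Fin (L.length + 1) =>
        wElt φ b (1 - (Fin.cons (1 - s) i : Fin (L.length + 2) → Fin 2) m.castSucc)
          ((Fin.cons (1 - s) i : Fin (L.length + 2) → Fin 2) m.succ)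
          ((Fin.cons p.2 k : Fin (L.length + 1) → ℕ) m)).prod = wList φ b s (p :: L) := by
        rw [List.ofFn_succ, List.prod_cons, wList, ← h]
        simp only [Fin.castSucc_zero, Fin.cons_zero, Fin.cons_succ, hi, fin2_sub_sub,
          ← Fin.succ_castSucc]
      exact e

theorem wList_zero (φ : A →ₗ[ℂ] ℂ) (b : A) (hb : AltWordCond φ b) (s : Fin 2)
    (L : List (Fin 2 × ℕ)) (hL : ∀ p ∈ L, 1 ≤ p.2) (h0 : L ≠ []) : φ (wList φ b s L) = 0 := by
  obtain ⟨i, k, hk, -, h⟩ := wList_eq_ofFn φ b L s hL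
  rw [← h]
  exact hb _ (List.length_pos_iff.2 h0) i k hk

/-- A word in `b`, `star b`. -/
def wd (b : A) (l : List (Fin 2)) : A := (l.map (sel b)).prod

/-- Uncentred version of `wElt`. -/
def pElt (b : A) (i j : Fin 2) (k : ℕ) : A :=
  if i = 0 then
    if j = 0 then (b * star b) ^ k
    else b * (star b * b) ^ (k - 1)
  else
    if j = 0 then star b * (b * star b) ^ (k - 1)
    else (star b * b) ^ k

/-- Span of words of length less than `n`. -/
def vSp (b : A) (n : ℕ) : Submodule ℂ A :=
  Submodule.span ℂ {x | ∃ l : List (Fin 2), l.length < n ∧ x = wd b l}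

theorem wd_mem (b : A) (l : List (Fin 2)) (n : ℕ) (h : l.length < n) : wd b l ∈ vSp b n :=
  Submodule.subset_span ⟨l, h, rfl⟩

theorem vSp_mono (b : A) {m n : ℕ} (h : m ≤ n) : vSp b m ≤ vSp b n :=
  Submodule.span_mono fun _ ⟨l, hl, e⟩ => ⟨l, hl.trans_le h, e⟩

theorem wd_append (b : A) (l l' : List (Fin 2)) : wd b (l ++ l') = wd b l * wd b l' := by
  simp [wd]

theorem wd_mul_mem (b : A) (l : List (Fin 2)) (n : ℕ) (x : A) (h : x ∈ vSp b n) :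
    wd b l * x ∈ vSp b (l.length + n) := by
  induction h using Submodule.span_induction with
  | mem x hx =>
    obtain ⟨l', hl', rfl⟩ := hx
    rw [← wd_append]
    exact wd_mem _ _ _ (by simp; omega)
  | zero => simp
  | add x y _ _ hx hy => rw [mul_add]; exact add_mem hx hy
  | smul a x _ hx => rw [mul_smul_comm]; exact Submodule.smul_mem _ _ hx

/-- Merging a letter into an alternating piece. -/
theorem sel_mul_pElt (b : A) (s t j : Fin 2) (k : ℕ) (hk : 1 ≤ k) (hst : s ≠ t) :
    ∃ k', 1 ≤ k' ∧ sel b s * pElt b t j k = pElt b s j k' := by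
  obtain ⟨k, rfl⟩ := Nat.exists_eq_add_of_le' hk
  by_cases hs : s = 0
  · have ht : t = 1 := by omega
    subst hs ht
    by_cases hj : j = 0
    · refine ⟨k + 1, by omega, ?_⟩
      simp [sel, pElt, hj, pow_succ', mul_assoc]
    · refine ⟨k + 2, by omega, ?_⟩
      simp [sel, pElt, hj]
  · have hs : s = 1 := by omega
    have ht : t = 0 := by omega
    subst hs ht
    by_cases hj : j = 0
    · refine ⟨k + 2, by omega, ?_⟩
      simp [sel, pElt, hj]
    · refine ⟨k + 1, by omega, ?_⟩
      simp [sel, pElt, hj, pow_succ', mul_assoc]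

theorem wd_single (b : A) (s : Fin 2) : wd b [s] = pElt b s (1 - s) 1 := by
  fin_cases s <;> simp [wd, sel, pElt]

theorem phi_pow_comm (φ : A →ₗ[ℂ] ℂ) (hφtr : ∀ x y : A, φ (x * y) = φ (y * x)) (b : A) (k : ℕ)
    (hk : 1 ≤ k) : φ ((b * star b) ^ k) = φ ((star b * b) ^ k) := by
  obtain ⟨k, rfl⟩ := Nat.exists_eq_add_of_le' hk
  have h : b * (star b * b) ^ k = (b * star b) ^ k * b := by
    induction k with
    | zero => simp
    | succ n ih => rw [pow_succ, ← mul_assoc, ih (by omega), pow_succ]; simp only [mul_assoc]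
  rw [pow_succ, ← mul_assoc, ← h, hφtr, pow_succ', ← mul_assoc]

section pair
variable {A' : Type*} [Ring A'] [Algebra ℂ A'] [StarRing A']

theorem fst_wd (b : A) (c : A') (l : List (Fin 2)) : wd (b, c) l = (wd b l, wd c l) := by
  induction l with
  | nil => rfl
  | cons s l ih =>
    simp only [wd, List.map_cons, List.prod_cons] at ih ⊢
    rw [ih]
    by_cases hs : s = 0 <;> simp [sel, hs, Prod.ext_iff]

theorem pElt_pair (b : A) (c : A') (i j : Fin 2) (k : ℕ) :
    pElt (b, c) i j k = (pElt b i j k, pElt c i j k) := by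
  unfold pElt
  split_ifs <;> simp [Prod.ext_iff]

theorem pElt_sub (φ : A →ₗ[ℂ] ℂ) (φ' : A' →ₗ[ℂ] ℂ)
    (b : A) (c : A')
    (hmom : ∀ k : ℕ, 1 ≤ k → φ ((star b * b) ^ k) = φ' ((star c * c) ^ k))
    (hmom' : ∀ k : ℕ, 1 ≤ k → φ ((b * star b) ^ k) = φ' ((c * star c) ^ k))
    (i j : Fin 2) (k : ℕ) (hk : 1 ≤ k) :
    ∃ γ : ℂ, (wElt φ b i j k, wElt φ' c i j k) = pElt (b, c) i j k - γ • 1 := by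
  rw [pElt_pair]
  unfold wElt pElt
  split_ifs
  · exact ⟨φ ((b * star b) ^ k), by simp [Prod.ext_iff, Algebra.algebraMap_eq_smul_one, hmom' k hk]⟩
  · exact ⟨0, by simp⟩
  · exact ⟨0, by simp⟩
  · exact ⟨φ ((star b * b) ^ k), by simp [Prod.ext_iff, Algebra.algebraMap_eq_smul_one, hmom k hk]⟩

theorem step (φ : A →ₗ[ℂ] ℂ) (φ' : A' →ₗ[ℂ] ℂ)
    (b : A) (c : A')
    (hmom : ∀ k : ℕ, 1 ≤ k → φ ((star b * b) ^ k) = φ' ((star c * c) ^ k))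
    (hmom' : ∀ k : ℕ, 1 ≤ k → φ ((b * star b) ^ k) = φ' ((c * star c) ^ k))
    (s j : Fin 2) (k : ℕ) (hk : 1 ≤ k) (l₁ l₂ : List (Fin 2)) (h1 : l₁ ≠ [])
    (hP : wd (b, c) l₁ = pElt (b, c) s j k) (R : A × A')
    (hR : wd (b, c) l₂ - R ∈ vSp (b, c) l₂.length) :
    wd (b, c) (l₁ ++ l₂) - (wElt φ b s j k, wElt φ' c s j k) * R
      ∈ vSp (b, c) (l₁ ++ l₂).length := by
  obtain ⟨γ, hγ⟩ := pElt_sub φ φ' b c hmom hmom' s j k hk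
  have hpos := List.length_pos_iff.2 h1
  have e : wd (b, c) (l₁ ++ l₂) - (wElt φ b s j k, wElt φ' c s j k) * R
      = wd (b, c) l₁ * (wd (b, c) l₂ - R) + γ • (wd (b, c) l₂ - (wd (b, c) l₂ - R)) := by
    rw [hγ, ← hP, wd_append, sub_mul, smul_mul_assoc, one_mul, mul_sub, sub_sub_cancel]
    abel
  rw [e, List.length_append]
  refine add_mem (wd_mul_mem _ _ _ _ hR) (Submodule.smul_mem _ _ (sub_mem ?_ ?_))
  · exact wd_mem _ _ _ (by omega)
  · exact vSp_mono _ (by omega) hR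

theorem decomp (φ : A →ₗ[ℂ] ℂ) (φ' : A' →ₗ[ℂ] ℂ)
    (b : A) (c : A')
    (hmom : ∀ k : ℕ, 1 ≤ k → φ ((star b * b) ^ k) = φ' ((star c * c) ^ k))
    (hmom' : ∀ k : ℕ, 1 ≤ k → φ ((b * star b) ^ k) = φ' ((c * star c) ^ k))
    (l : List (Fin 2)) : ∀ s, ∃ (j : Fin 2) (k : ℕ) (L : List (Fin 2 × ℕ)) (l₁ l₂ : List (Fin 2)),
      1 ≤ k ∧ (∀ p ∈ L, 1 ≤ p.2) ∧ s :: l = l₁ ++ l₂ ∧ l₁ ≠ [] ∧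
      wd (b, c) l₁ = pElt (b, c) s j k ∧
      wd (b, c) l₂ - (wList φ b (1 - j) L, wList φ' c (1 - j) L) ∈ vSp (b, c) l₂.length := by
  induction l with
  | nil =>
    intro s
    refine ⟨1 - s, 1, [], [s], [], le_rfl, by simp, rfl, by simp, wd_single _ _, ?_⟩
    have : wd (b, c) [] - ((1 : A), (1 : A')) = 0 := by simp [wd, Prod.ext_iff]
    simp only [wList, this, zero_mem]
  | cons t l ih =>
    intro s
    obtain ⟨j, k, L, l₁, l₂, hk, hL, hl, h1, hP, hR⟩ := ih t
    by_cases hst : s = t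
    · subst hst
      refine ⟨1 - s, 1, (j, k) :: L, [s], s :: l, le_rfl, ?_, rfl, by simp, wd_single _ _, ?_⟩
      · intro p hp
        rcases List.mem_cons.1 hp with rfl | hp
        · exact hk
        · exact hL p hp
      · rw [fin2_sub_sub, hl]
        exact step φ φ' b c hmom hmom' s j k hk l₁ l₂ h1 hP _ hR
    · obtain ⟨k', hk', e⟩ := sel_mul_pElt (b, c) s t j k hk hst
      refine ⟨j, k', L, s :: l₁, l₂, hk', hL, by simp [hl], by simp, ?_, hR⟩
      rw [← e, ← hP]
      simp [wd]

theorem main_aux (φ : A →ₗ[ℂ] ℂ) (φ' : A' →ₗ[ℂ] ℂ)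
    (hφ1 : φ 1 = 1) (hφ'1 : φ' 1 = 1)
    (b : A) (c : A')
    (hb : AltWordCond φ b) (hc : AltWordCond φ' c)
    (hmom : ∀ k : ℕ, 1 ≤ k → φ ((star b * b) ^ k) = φ' ((star c * c) ^ k))
    (hmom' : ∀ k : ℕ, 1 ≤ k → φ ((b * star b) ^ k) = φ' ((c * star c) ^ k))
    (N : ℕ) : ∀ l : List (Fin 2), l.length = N → φ (wd b l) = φ' (wd c l) := by
  induction N using Nat.strong_induction_on with
  | _ N IH =>
    intro l hlN
    cases l with
    | nil => simp [wd, hφ1, hφ'1]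
    | cons s l =>
      obtain ⟨j, k, L, l₁, l₂, hk, hL, hl, h1, hP, hR⟩ := decomp φ φ' b c hmom hmom' l s
      have hmem := step φ φ' b c hmom hmom' s j k hk l₁ l₂ h1 hP _ hR
      rw [← hl, hlN] at hmem
      have hV : ∀ x ∈ vSp (b, c) N, φ x.1 = φ' x.2 := by
        intro x hx
        induction hx using Submodule.span_induction with
        | mem x hx =>
          obtain ⟨l', hl', rfl⟩ := hx
          rw [fst_wd]
          exact IH _ hl' l' rfl
        | zero => simp
        | add x y _ _ hx hy => simp [hx, hy]
        | smul a x _ hx => simp [hx]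
      have h := hV _ hmem
      have hL' : ∀ p ∈ (j, k) :: L, 1 ≤ p.2 := by
        intro p hp
        rcases List.mem_cons.1 hp with rfl | hp
        · exact hk
        · exact hL p hp
      have z1 := wList_zero φ b hb s ((j, k) :: L) hL' (by simp)
      have z2 := wList_zero φ' c hc s ((j, k) :: L) hL' (by simp)
      simp only [wList] at z1 z2
      simpa [fst_wd, z1, z2] using h

end pair

/-- Lemma 3.9, 2° ⇒ 1°: the alternating-word condition, together with the distribution of
`b*b`, determines the `*`-distribution of `b`. -/
theorem altWordCond_determines_star_distribution
    {A' : Type*} [Ring A'] [Algebra ℂ A'] [StarRing A']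
    (φ : A →ₗ[ℂ] ℂ) (φ' : A' →ₗ[ℂ] ℂ)
    (hφ1 : φ 1 = 1)
    (hφpos : ∀ x : A, 0 ≤ φ (star x * x))
    (hφtr : ∀ x y : A, φ (x * y) = φ (y * x))
    (hφ'1 : φ' 1 = 1)
    (hφ'pos : ∀ x : A', 0 ≤ φ' (star x * x))
    (hφ'tr : ∀ x y : A', φ' (x * y) = φ' (y * x))
    (b : A) (c : A')
    (hb : AltWordCond φ b) (hc : AltWordCond φ' c)
    (hmom : ∀ k : ℕ, 1 ≤ k → φ ((star b * b) ^ k) = φ' ((star c * c) ^ k)) :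
    ∀ (n : ℕ), 0 < n → ∀ ε : Fin n → Fin 2,
      φ ((List.ofFn fun m => sel b (ε m)).prod) =
        φ' ((List.ofFn fun m => sel c (ε m)).prod) := by
  intro n _ ε
  have h := main_aux φ φ' hφ1 hφ'1 b c hb hc hmom
    (fun k hk => by rw [phi_pow_comm φ hφtr b k hk, phi_pow_comm φ' hφ'tr c k hk, hmom k hk])
    _ (List.ofFn ε) rfl
  simpa [wd, List.map_ofFn, Function.comp_def] using h
end
end

section
/- Let a, ξ ∈ 𝒜 and suppose the pair (ξ, ξ*) fulfills the conjugate relations for (a, a*). Set X := [[0, ξ*],[ξ, 0]] ∈ M₂(𝒜). Then X fulfills the conjugate relations for A with respect to M₂(ℂ1) and η: for every n ≥ 0 and all B₀, B₁, …, Bₙ ∈ M₂(ℂ1), φ₂(X B₀ A B₁ ⋯ A Bₙ) = Σ_{m=1}^{n} φ₂( η(E_M(B₀ A B₁ ⋯ A B_{m−1})) · Bₘ A ⋯ A Bₙ ). (First half of Proposition 3.6.) -/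
open scoped BigOperators
open ComplexOrder

noncomputable section

variable {A : Type*} [Ring A] [Algebra ℂ A] [StarRing A]

/-- The word `a_{i₁} ⋯ a_{iₙ}` in `a, a*` given by a list of indices. -/
def wordOf (a : A) (l : List (Fin 2)) : A := (l.map (sel a)).prod

/-- The pair `(ξ, ξ*)` fulfills the conjugate relations for `(a, a*)`. -/
def ConjRel (φ : A →ₗ[ℂ] ℂ) (a ξ : A) : Prop :=
  ∀ (l : List (Fin 2)) (i : Fin 2),
    φ (sel ξ i * wordOf a l) =
      ∑ m ∈ Finset.range l.length,
        (if l.getD m 0 = i then φ (wordOf a (l.take m)) * φ (wordOf a (l.drop (m + 1)))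
         else 0)

/-- 2×2 matrices over `A`. -/
abbrev M₂ (A : Type*) := Matrix (Fin 2) (Fin 2) A

/-- The state `φ₂ = tr ⊗ φ` on `M₂(𝒜)`. -/
def phi2 (φ : A →ₗ[ℂ] ℂ) (X : M₂ A) : ℂ := (φ (X 0 0) + φ (X 1 1)) / 2

/-- The matrix `A = [[0, a], [a*, 0]]`. -/
def Amat (a : A) : M₂ A := !![0, a; star a, 0]

/-- The matrix `X = [[0, ξ*], [ξ, 0]]`. -/
def Xmat (ξ : A) : M₂ A := !![0, star ξ; ξ, 0]

/-- The conditional expectation `E_M : M₂(𝒜) → M₂(ℂ1)`. -/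
def EM (φ : A →ₗ[ℂ] ℂ) (X : M₂ A) : M₂ A := Matrix.of fun i j => algebraMap ℂ A (φ (X i j))

/-- The map `η([[x₁₁,x₁₂],[x₂₁,x₂₂]]) = [[x₂₂,0],[0,x₁₁]]`. -/
def etaM (X : M₂ A) : M₂ A := !![X 1 1, 0; 0, X 0 0]

/-- Membership in `M₂(ℂ1)`, the scalar matrices. -/
def IsScalarMat (X : M₂ A) : Prop := ∀ i j, ∃ c : ℂ, X i j = algebraMap ℂ A c

/-- `chain Am [B₀, B₁, …, Bₙ] = B₀ (Am B₁) (Am B₂) ⋯ (Am Bₙ)`. -/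
def chain {T : Type*} [Ring T] (Am : T) : List T → T
  | [] => 1
  | B :: Bs => B * (Bs.map fun C => Am * C).prod

/-- `X` fulfills the conjugate relations for `Amat a` w.r.t. the matrices satisfying `P`
and the completely positive map `etaM ∘ E`. -/
def MatConjEta (φ : A →ₗ[ℂ] ℂ) (a : A) (X : M₂ A) (P : M₂ A → Prop) (E : M₂ A → M₂ A) :
    Prop :=
  ∀ l : List (M₂ A), l ≠ [] → (∀ C ∈ l, P C) →
    phi2 φ (X * chain (Amat a) l) =
      ∑ m ∈ Finset.range (l.length - 1),
        phi2 φ (etaM (E (chain (Amat a) (l.take (m + 1)))) * chain (Amat a) (l.drop (m + 1)))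

theorem chain_cons_ne {T : Type*} [Ring T] (Am B : T) (l : List T) (hl : l ≠ []) :
    chain Am (B :: l) = B * (Am * chain Am l) := by
  cases l with
  | nil => exact absurd rfl hl
  | cons C l => simp [chain, mul_assoc]

theorem chain_entry (a : A) (B : M₂ A) (b : Fin 2 → Fin 2 → ℂ)
    (hb : ∀ i j, B i j = algebraMap ℂ A (b i j)) (l : List (M₂ A)) (hl : l ≠ []) (j k : Fin 2) :
    chain (Amat a) (B :: l) j k =
      b j 0 • (sel a 0 * chain (Amat a) l 1 k) + b j 1 • (sel a 1 * chain (Amat a) l 0 k) := by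
  rw [chain_cons_ne _ _ _ hl]
  generalize chain (Amat a) l = Y
  rw [Matrix.mul_apply, Fin.sum_univ_two, Matrix.mul_apply, Matrix.mul_apply, Fin.sum_univ_two,
    Fin.sum_univ_two]
  simp [hb, Amat, sel, Algebra.smul_def]

theorem wordOf_append (a : A) (w : List (Fin 2)) (p : Fin 2) :
    wordOf a (w ++ [p]) = wordOf a w * sel a p := by
  simp [wordOf]

theorem first_sum (φ : A →ₗ[ℂ] ℂ) (a : A) (i : Fin 2) (w : List (Fin 2)) (p : Fin 2) (y : A) :
    (∑ m ∈ Finset.range (w ++ [p]).length,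
        (if (w ++ [p]).getD m 0 = i then
          φ (wordOf a ((w ++ [p]).take m)) * φ (wordOf a ((w ++ [p]).drop (m + 1)) * y) else 0)) =
    (∑ m ∈ Finset.range w.length,
        (if w.getD m 0 = i then
          φ (wordOf a (w.take m)) * φ (wordOf a (w.drop (m + 1)) * (sel a p * y)) else 0)) +
      (if p = i then φ (wordOf a w) * φ y else 0) := by
  rw [List.length_append, List.length_singleton, Finset.sum_range_succ]
  congr 1
  · apply Finset.sum_congr rfl
    intro m hm
    have hm := Finset.mem_range.1 hm
    rw [List.getD_append _ _ _ _ hm, List.take_append_of_le_length hm.le,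
      List.drop_append_of_le_length hm, wordOf_append, mul_assoc]
  · simp [wordOf]

theorem key (φ : A →ₗ[ℂ] ℂ) (a ξ : A) (hconj : ConjRel φ a ξ) (l : List (M₂ A)) :
    l ≠ [] → (∀ C ∈ l, IsScalarMat C) → ∀ (w : List (Fin 2)) (i i' j k : Fin 2), i' = 1 - i →
    φ (sel ξ i * (wordOf a w * chain (Amat a) l j k)) =
      (∑ m ∈ Finset.range w.length,
        (if w.getD m 0 = i then
          φ (wordOf a (w.take m)) * φ (wordOf a (w.drop (m + 1)) * chain (Amat a) l j k) else 0)) +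
      ∑ m ∈ Finset.range (l.length - 1),
        φ (wordOf a w * chain (Amat a) (l.take (m + 1)) j i) *
          φ (chain (Amat a) (l.drop (m + 1)) i' k) := by
  induction l with
  | nil => intro h; exact absurd rfl h
  | cons B l ih =>
    intro _ hC w i i' j k hi
    choose b hb using hC B (by simp)
    by_cases hl : l = []
    · subst hl
      have e : ∀ x : A, x * algebraMap ℂ A (b j k) = b j k • x := fun x => by
        rw [Algebra.smul_def, Algebra.commutes]
      have h := hconj w i
      simp only [chain, List.map_nil, List.prod_nil, mul_one, hb, e, mul_smul_comm, map_smul, h,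
        smul_eq_mul, Finset.mul_sum, List.length_singleton, Nat.sub_self, Finset.range_zero,
        Finset.sum_empty, add_zero]
      apply Finset.sum_congr rfl
      intro m _
      split_ifs <;> ring
    · have ih' := ih hl (fun C h => hC C (by simp [h]))
      have ce := chain_entry a B b hb l hl j k
      have h0 := ih' (w ++ [0]) i i' 1 k hi
      have h1 := ih' (w ++ [1]) i i' 0 k hi
      rw [first_sum, wordOf_append, mul_assoc] at h0 h1
      obtain ⟨n, hn⟩ : ∃ n, l.length = n + 1 :=
        ⟨l.length - 1, by have := List.length_pos_iff.2 hl; omega⟩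
      have e1 : (B :: l).length - 1 = n + 1 := by simp [hn]
      have e2 : l.length - 1 = n := by simp [hn]
      rw [e2] at h0 h1
      rw [e1, Finset.sum_range_succ']
      have z : φ (wordOf a w * chain (Amat a) ((B :: l).take (0 + 1)) j i) =
          b j i * φ (wordOf a w) := by
        simp only [zero_add, List.take_succ_cons, List.take_zero, chain, List.map_nil,
          List.prod_nil, mul_one, hb]
        rw [← Algebra.commutes, ← Algebra.smul_def, map_smul, smul_eq_mul]
      have s : ∀ m, φ (wordOf a w * chain (Amat a) ((B :: l).take (m + 1 + 1)) j i) =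
          b j 0 * φ (wordOf a w * sel a 0 * chain (Amat a) (l.take (m + 1)) 1 i) +
          b j 1 * φ (wordOf a w * sel a 1 * chain (Amat a) (l.take (m + 1)) 0 i) := by
        intro m
        rw [List.take_succ_cons, chain_entry a B b hb _ (by simp [hl])]
        simp [mul_add, mul_assoc]
      have f : ∀ x : A, φ (x * chain (Amat a) (B :: l) j k) =
          b j 0 * φ (x * (sel a 0 * chain (Amat a) l 1 k)) +
          b j 1 * φ (x * (sel a 1 * chain (Amat a) l 0 k)) := by
        intro x
        rw [ce]
        simp [mul_add]
      rw [← mul_assoc, f, mul_assoc, mul_assoc, h0, h1]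
      simp only [z, s, f, List.drop_succ_cons, List.drop_zero]
      have g : ∀ (c : Prop) [Decidable c] (x y u v t: ℂ),
          (if c then t * (x * u + y * v) else 0) =
          x * (if c then t * u else 0) + y * (if c then t * v else 0) := by
        intros; split_ifs <;> ring
      simp only [g, add_mul, Finset.sum_add_distrib, mul_assoc, ← Finset.mul_sum]
      subst hi
      fin_cases i <;> simp <;> ring

/-- First half of Proposition 3.6: if `(ξ, ξ*)` is a conjugate system for `(a,a*)`, then
`X = [[0,ξ*],[ξ,0]]` fulfills the conjugate relations for `A` w.r.t. `M₂(ℂ1)` and `η`. -/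
theorem conjugate_relations_matrix_of_scalar
    (φ : A →ₗ[ℂ] ℂ)
    (hφ1 : φ 1 = 1)
    (hφpos : ∀ x : A, 0 ≤ φ (star x * x))
    (hφtr : ∀ x y : A, φ (x * y) = φ (y * x))
    (a ξ : A) (hconj : ConjRel φ a ξ) :
    MatConjEta φ a (Xmat ξ) IsScalarMat (EM φ) := by
  intro l hl hC
  have h0 := key φ a ξ hconj l hl hC [] 0 1 0 1 rfl
  have h1 := key φ a ξ hconj l hl hC [] 1 0 1 0 rfl
  simp only [wordOf, List.map_nil, List.prod_nil, one_mul, List.length_nil, Finset.range_zero,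
    Finset.sum_empty, zero_add] at h0 h1
  have e : ∀ Y : M₂ A, phi2 φ (Xmat ξ * Y) = (φ (sel ξ 1 * Y 1 0) + φ (sel ξ 0 * Y 0 1)) / 2 := by
    intro Y
    simp [phi2, Xmat, sel, Matrix.mul_apply, Fin.sum_univ_two]
  have e' : ∀ Y Z : M₂ A, phi2 φ (etaM (EM φ Y) * Z) =
      (φ (Y 1 1) * φ (Z 0 0) + φ (Y 0 0) * φ (Z 1 1)) / 2 := by
    intro Y Z
    simp [phi2, etaM, EM, Matrix.mul_apply, Fin.sum_univ_two, ← Algebra.smul_def]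
  rw [e, h0, h1, ← Finset.sum_add_distrib, Finset.sum_div]
  simp only [e']
end
end

section
/- Let a ∈ 𝒜 and let X ∈ M₂(𝒜) fulfill the conjugate relations for A with respect to 𝒟 and η₀: for every n ≥ 0 and all D₀, …, Dₙ ∈ 𝒟, φ₂(X D₀ A D₁ ⋯ A Dₙ) = Σ_{m=1}^{n} φ₂( η₀(E_D(D₀ A ⋯ A D_{m−1})) · Dₘ A ⋯ A Dₙ ). Then X fulfills the conjugate relations for A with respect to the scalars: φ₂(X Aⁿ) = Σ_{m=1}^{n} φ₂(A^{m−1}) φ₂(A^{n−m}) for every n ≥ 0. (One direction of Proposition 3.7.) -/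
open scoped BigOperators
open ComplexOrder

noncomputable section

variable {A : Type*} [Ring A] [Algebra ℂ A] [StarRing A]

/-- The conditional expectation `E_D : M₂(𝒜) → 𝒟` onto the scalar diagonal matrices. -/
def ED (φ : A →ₗ[ℂ] ℂ) (X : M₂ A) : M₂ A :=
  !![algebraMap ℂ A (φ (X 0 0)), 0; 0, algebraMap ℂ A (φ (X 1 1))]

/-- Membership in `𝒟`, the scalar diagonal matrices. -/
def IsDiagScalar (X : M₂ A) : Prop :=
  (∃ c : ℂ, X 0 0 = algebraMap ℂ A c) ∧ (∃ c : ℂ, X 1 1 = algebraMap ℂ A c) ∧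
    X 0 1 = 0 ∧ X 1 0 = 0

theorem phi_diag_pow (φ : A →ₗ[ℂ] ℂ) (hφtr : ∀ x y : A, φ (x * y) = φ (y * x)) (a : A) (m : ℕ) :
    φ ((Amat a ^ m) 0 0) = φ ((Amat a ^ m) 1 1) := by
  cases m with
  | zero => simp
  | succ k =>
    have h0 : (Amat a ^ (k + 1)) 0 0 = a * (Amat a ^ k) 1 0 := by
      rw [pow_succ', Matrix.mul_apply, Fin.sum_univ_two]
      simp [Amat]
    have h1 : (Amat a ^ (k + 1)) 1 1 = (Amat a ^ k) 1 0 * a := by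
      rw [pow_succ, Matrix.mul_apply, Fin.sum_univ_two]
      simp [Amat]
    rw [h0, h1, hφtr]

theorem chain_replicate_one (a : A) (k : ℕ) :
    chain (Amat a) (List.replicate (k + 1) 1) = Amat a ^ k := by
  simp [List.replicate_succ, chain]

/-- One direction of Proposition 3.7: if `X` fulfills the conjugate relations for `A` with
respect to `𝒟` and `η₀`, then `X` fulfills the conjugate relations for `A` with respect to
the scalars. -/
theorem conjugate_relations_scalars_of_D
    (φ : A →ₗ[ℂ] ℂ)
    (hφ1 : φ 1 = 1)
    (hφpos : ∀ x : A, 0 ≤ φ (star x * x))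
    (hφtr : ∀ x y : A, φ (x * y) = φ (y * x))
    (a : A) (X : M₂ A)
    (hX : MatConjEta φ a X IsDiagScalar (ED φ)) :
    ∀ n : ℕ,
      phi2 φ (X * Amat a ^ n) =
        ∑ m ∈ Finset.range n, phi2 φ (Amat a ^ m) * phi2 φ (Amat a ^ (n - 1 - m)) := by
  intro n
  have h := hX (List.replicate (n + 1) 1) (by simp) (by
    intro C hC
    rw [List.eq_of_mem_replicate hC]
    exact ⟨⟨1, by simp⟩, ⟨1, by simp⟩, by simp, by simp⟩)
  rw [chain_replicate_one] at h
  rw [h]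
  simp only [List.length_replicate, Nat.add_sub_cancel]
  refine Finset.sum_congr rfl fun m hm => ?_
  have hm' : m < n := Finset.mem_range.mp hm
  rw [List.take_replicate, List.drop_replicate, min_eq_left (by omega),
    show n + 1 - (m + 1) = (n - 1 - m) + 1 by omega, chain_replicate_one, chain_replicate_one]
  have hd := phi_diag_pow φ hφtr a m
  simp only [phi2, etaM, ED, Matrix.mul_apply, Fin.sum_univ_two]
  simp [hd, ← Algebra.smul_def]
  ring
end
end

section
/- Let a, ξ ∈ 𝒜 with the pair (ξ, ξ*) fulfilling the conjugate relations for (a, a*), and set X := [[0, ξ*],[ξ, 0]] ∈ M₂(𝒜). Then X fulfills the conjugate relations for A with respect to the scalars: φ₂(X Aⁿ) = Σ_{m=1}^{n} φ₂(A^{m−1}) φ₂(A^{n−m}) for every n ≥ 0. Moreover 2 φ₂(X*X) = φ(ξ*ξ) + φ(ξ ξ*). (Remark 3.10; this is the short-cut proof that Φ*(a,a*) ≥ 2Φ*(μ).) -/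
open scoped BigOperators
open ComplexOrder

noncomputable section

variable {A : Type*} [Ring A] [Algebra ℂ A] [StarRing A]

/-- Alternating index lists. -/
def altL : Fin 2 → ℕ → List (Fin 2)
  | _, 0 => []
  | i, n + 1 => i :: altL (1 - i) n

/-- The index at position `n` of an alternating list. -/
def altC (i : Fin 2) (n : ℕ) : Fin 2 := if n % 2 = 0 then i else 1 - i

lemma one_sub_one_sub (i : Fin 2) : (1 - (1 - i) : Fin 2) = i := by
  fin_cases i <;> rfl

lemma altC_succ (i : Fin 2) (n : ℕ) : altC (1 - i) n = altC i (n + 1) := by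
  unfold altC
  rcases Nat.mod_two_eq_zero_or_one n with h | h
  · rw [if_pos h, if_neg (by omega)]
  · rw [if_neg (by omega), if_pos (by omega), one_sub_one_sub]

lemma altL_length (n : ℕ) : ∀ i, (altL i n).length = n := by
  induction n with
  | zero => intro i; rfl
  | succ n ih => intro i; simp [altL, ih]

lemma altL_take (m : ℕ) : ∀ n i, m ≤ n → (altL i n).take m = altL i m := by
  induction m with
  | zero => intro n i _; simp [altL]
  | succ m ih =>
    intro n i h
    obtain ⟨n, rfl⟩ : ∃ k, n = k + 1 := ⟨n - 1, by omega⟩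
    simp [altL, ih n (1 - i) (by omega)]

lemma altL_drop (m : ℕ) : ∀ n i, m ≤ n → (altL i n).drop m = altL (altC i m) (n - m) := by
  induction m with
  | zero => intro n i _; simp [altC]
  | succ m ih =>
    intro n i h
    obtain ⟨n, rfl⟩ : ∃ k, n = k + 1 := ⟨n - 1, by omega⟩
    simp [altL, ih n (1 - i) (by omega), altC_succ]

lemma altL_getD (m : ℕ) : ∀ n i, m < n → (altL i n).getD m 0 = altC i m := by
  induction m with
  | zero =>
    intro n i h
    obtain ⟨n, rfl⟩ : ∃ k, n = k + 1 := ⟨n - 1, by omega⟩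
    simp [altL, altC]
  | succ m ih =>
    intro n i h
    obtain ⟨n, rfl⟩ : ∃ k, n = k + 1 := ⟨n - 1, by omega⟩
    have := ih n (1 - i) (by omega)
    rw [altC_succ] at this
    simpa [altL] using this

lemma altL_snoc (n : ℕ) : ∀ i, altL i (n + 1) = altL i n ++ [altC i n] := by
  induction n with
  | zero => intro i; simp [altL, altC]
  | succ n ih =>
    intro i
    rw [altL, ih, altC_succ]
    simp [altL]

lemma word_tr (φ : A →ₗ[ℂ] ℂ) (hφtr : ∀ x y : A, φ (x * y) = φ (y * x)) (a : A)
    (n : ℕ) (hn : n % 2 = 0) (i : Fin 2) :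
    φ (wordOf a (altL i n)) = φ (wordOf a (altL 0 n)) := by
  rcases n with _ | n
  · rfl
  have h1 : φ (wordOf a (altL 1 (n + 1))) = φ (wordOf a (altL 0 (n + 1))) := by
    rw [altL_snoc n 1]
    have : altC 1 n = 0 := by simp [altC, show n % 2 = 1 by omega]
    rw [this]
    simp only [wordOf, List.map_append, List.prod_append, altL, List.map_cons, List.prod_cons]
    rw [hφtr]
    simp
  fin_cases i
  · rfl
  · exact h1

lemma Amat_pow (a : A) (n : ℕ) : ∀ i j,
    (Amat a ^ n) i j = if j = altC i n then wordOf a (altL i n) else 0 := by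
  induction n with
  | zero =>
    intro i j
    simp [altC, altL, wordOf, Matrix.one_apply, eq_comm]
  | succ n ih =>
    intro i j
    rw [pow_succ', Matrix.mul_apply, Fin.sum_univ_two, ih, ih, ← altC_succ]
    fin_cases i <;> simp [Amat, altL, wordOf, sel]

lemma phi2_pow (φ : A →ₗ[ℂ] ℂ) (hφtr : ∀ x y : A, φ (x * y) = φ (y * x)) (a : A) (n : ℕ) :
    phi2 φ (Amat a ^ n) = if n % 2 = 0 then φ (wordOf a (altL 0 n)) else 0 := by
  unfold phi2
  rw [Amat_pow, Amat_pow]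
  by_cases h : n % 2 = 0
  · rw [if_pos (by simp [altC, h]), if_pos (by simp [altC, h]), if_pos h,
      word_tr φ hφtr a n h 1]
    ring
  · rw [if_neg (by simp [altC, h]), if_neg (by simp [altC, h]), if_neg h]
    simp

lemma conj_alt (φ : A →ₗ[ℂ] ℂ) (hφtr : ∀ x y : A, φ (x * y) = φ (y * x)) (a ξ : A)
    (hconj : ConjRel φ a ξ) (n : ℕ) (hn : n % 2 = 1) (i : Fin 2) :
    φ (sel ξ i * wordOf a (altL i n)) =
      ∑ m ∈ Finset.range n, phi2 φ (Amat a ^ m) * phi2 φ (Amat a ^ (n - 1 - m)) := by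
  rw [hconj, altL_length]
  refine Finset.sum_congr rfl fun m hm => ?_
  rw [Finset.mem_range] at hm
  rw [altL_getD m n i hm, altL_take m n i hm.le, altL_drop (m + 1) n i hm,
    phi2_pow φ hφtr, phi2_pow φ hφtr, show n - (m + 1) = n - 1 - m by omega]
  rcases Nat.mod_two_eq_zero_or_one m with h | h
  · rw [if_pos (by simp [altC, h]), if_pos h, if_pos (by omega), word_tr φ hφtr a m h,
      word_tr φ hφtr a (n - 1 - m) (by omega)]
  · rw [if_neg, if_neg (by omega), zero_mul]
    simp only [altC, h]
    fin_cases i <;> simp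

/-- Remark 3.10 (short-cut): if `(ξ, ξ*)` fulfills the conjugate relations for `(a, a*)`,
then `X = [[0,ξ*],[ξ,0]]` fulfills the conjugate relations for `A` with respect to the
scalars, and moreover `2 φ₂(X*X) = φ(ξ*ξ) + φ(ξξ*)`. -/
theorem conjugate_relations_shortcut
    (φ : A →ₗ[ℂ] ℂ)
    (hφ1 : φ 1 = 1)
    (hφpos : ∀ x : A, 0 ≤ φ (star x * x))
    (hφtr : ∀ x y : A, φ (x * y) = φ (y * x))
    (a ξ : A) (hconj : ConjRel φ a ξ) :
    (∀ n : ℕ,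
      phi2 φ (Xmat ξ * Amat a ^ n) =
        ∑ m ∈ Finset.range n, phi2 φ (Amat a ^ m) * phi2 φ (Amat a ^ (n - 1 - m))) ∧
    2 * phi2 φ (star (Xmat ξ) * Xmat ξ) = φ (star ξ * ξ) + φ (ξ * star ξ) := by
  refine ⟨fun n => ?_, ?_⟩
  · have h : phi2 φ (Xmat ξ * Amat a ^ n) = (φ (star ξ * (Amat a ^ n) 1 0)
        + φ (ξ * (Amat a ^ n) 0 1)) / 2 := by
      simp [phi2, Xmat, Matrix.mul_apply, Fin.sum_univ_two]
    rw [h, Amat_pow, Amat_pow]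
    rcases Nat.mod_two_eq_zero_or_one n with hn | hn
    · rw [Finset.sum_eq_zero]
      · simp [altC, hn]
      · intro m hm
        rw [Finset.mem_range] at hm
        rw [phi2_pow φ hφtr, phi2_pow φ hφtr]
        rcases Nat.mod_two_eq_zero_or_one m with h | h
        · rw [if_neg (show ¬ (n - 1 - m) % 2 = 0 by omega), mul_zero]
        · rw [if_neg (show ¬ m % 2 = 0 by omega), zero_mul]
    · have h0 := conj_alt φ hφtr a ξ hconj n hn 0
      have h1 := conj_alt φ hφtr a ξ hconj n hn 1
      rw [if_pos (by simp [altC, hn]), if_pos (by simp [altC, hn])]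
      simp only [sel, if_true, one_ne_zero, if_false] at h0 h1
      rw [h0, h1]
      ring
  · simp [phi2, Xmat, Matrix.mul_apply, Fin.sum_univ_two, Matrix.star_apply]
    ring
end
end

section
/- Let ℬ ⊆ 𝒜 be a unital *-subalgebra, d ≥ 1, and let a_ij, ξ_ij ∈ 𝒜 (1 ≤ i, j ≤ d) be such that the family {ξ_ij, ξ_ij*} fulfills the conjugate relations for {a_ij, a_ij*} with respect to ℬ: writing x^{(1)} := x and x^{(2)} := x*, for all n ≥ 0, all b₀, …, bₙ ∈ ℬ and all index triples (k, l, ε), (k₁, l₁, ε₁), …, (kₙ, lₙ, εₙ) with 1 ≤ kₘ, lₘ ≤ d and εₘ ∈ {1, 2}: φ( ξ_{kl}^{(ε)} b₀ a_{k₁l₁}^{(ε₁)} b₁ ⋯ a_{kₙlₙ}^{(εₙ)} bₙ ) = Σ_{m=1}^{n} [ (k, l, ε) = (kₘ, lₘ, εₘ) ] · φ(b₀ a_{k₁l₁}^{(ε₁)} ⋯ a_{k_{m−1}l_{m−1}}^{(ε_{m−1})} b_{m−1}) · φ(bₘ a_{k_{m+1}l_{m+1}}^{(ε_{m+1})} ⋯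 a_{kₙlₙ}^{(εₙ)} bₙ). Set A := (a_ij) ∈ M_d(𝒜) and X := (1/d)·(ξ_ji)_{i,j} ∈ M_d(𝒜) (i.e. X_{ij} = ξ_{ji}/d). Then {X, X*} fulfills the conjugate relations for {A, A*} with respect to M_d(ℬ): writing A₁ := A, A₂ := A*, for all n ≥ 0, all B₀, …, Bₙ ∈ M_d(ℬ) and all i₁, …, iₙ ∈ {1,2}: φ_d(X B₀ A_{i₁} B₁ ⋯ A_{iₙ} Bₙ) = Σ_{m=1}^{n} δ_{iₘ,1} φ_d(B₀ A_{i₁} ⋯ A_{i_{m−1}} B_{m−1}) φ_d(Bₘ A_{i_{m+1}} ⋯ A_{iₙ} Bₙ), and the analogous relations hold with X* in place of X and δ_{iₘ,2} in place of δ_{iₘ,1}. Moreover φ_d(X*X) + φ_d(X X*) = d^{−3} Σ_{i,j=1}^{d} ( φ(ξ_ij* ξ_ij) + φ(ξ_ij ξ_ij*) ). (Forward direction of Proposition 4.1, 1°, yielding Φ*({a_ij, a_ij*} : ℬ) = d³ Φ*({A, A*} : M_d(ℬ)).) -/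
open scoped BigOperators
open ComplexOrder

noncomputable section

variable {A : Type*} [Ring A] [Algebra ℂ A] [StarRing A] [StarModule ℂ A]

/-- The word `b₀ x₁ b₁ x₂ b₂ ⋯ xₙ bₙ`. -/
def interWord {T : Type*} [Ring T] {n : ℕ} (bs : Fin (n + 1) → T) (xs : Fin n → T) : T :=
  bs 0 * (List.ofFn fun m : Fin n => xs m * bs m.succ).prod

/-- For `m : Fin n` (standing for the paper's index `m+1 ∈ {1, …, n}`), the prefix word
`b₀ x₁ b₁ ⋯ xₘ bₘ`. -/
def preWord {T : Type*} [Ring T] {n : ℕ} (bs : Fin (n + 1) → T) (xs : Fin n → T)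
    (m : Fin n) : T :=
  bs 0 * ((List.ofFn fun j : Fin n => xs j * bs j.succ).take (m : ℕ)).prod

/-- For `m : Fin n` (standing for the paper's index `m+1 ∈ {1, …, n}`), the suffix word
`b_{m+1} x_{m+2} b_{m+2} ⋯ xₙ bₙ`. -/
def sufWord {T : Type*} [Ring T] {n : ℕ} (bs : Fin (n + 1) → T) (xs : Fin n → T)
    (m : Fin n) : T :=
  bs m.succ * ((List.ofFn fun j : Fin n => xs j * bs j.succ).drop ((m : ℕ) + 1)).prod

/-- The normalized trace `φ_d = tr ⊗ φ` on `M_d(𝒜)`. -/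
def phid {d : ℕ} (φ : A →ₗ[ℂ] ℂ) (X : Matrix (Fin d) (Fin d) A) : ℂ :=
  (∑ i, φ (X i i)) / d

/-- The entry `a_{kl}^{(ε)}` selected by an index triple `(k, l, ε)`:
`ε = 0` gives `a_{kl}`, `ε = 1` gives `(a_{kl})*`. -/
def ent {d : ℕ} (a : Fin d → Fin d → A) (t : Fin d × Fin d × Fin 2) : A :=
  if t.2.2 = 0 then a t.1 t.2.1 else star (a t.1 t.2.1)

/-- The family `{ξ_ij, ξ_ij*}` fulfills the conjugate relations for `{a_ij, a_ij*}`
with respect to a unital *-subalgebra `B`. -/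
def FamConjRel {d : ℕ} (φ : A →ₗ[ℂ] ℂ) (B : StarSubalgebra ℂ A)
    (a ξ : Fin d → Fin d → A) : Prop :=
  ∀ (n : ℕ) (bs : Fin (n + 1) → A) (idx : Fin n → Fin d × Fin d × Fin 2)
    (t : Fin d × Fin d × Fin 2),
    (∀ m, bs m ∈ B) →
    φ (ent ξ t * interWord bs fun m => ent a (idx m)) =
      ∑ m : Fin n,
        (if idx m = t then
          φ (preWord bs (fun j => ent a (idx j)) m) *
            φ (sufWord bs (fun j => ent a (idx j)) m)
        else 0)

/-- `Xm` fulfills the conjugate relations for the matrix `Am` (paired with its adjoint,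
matching on the index `e`) with respect to the matrices satisfying `P`. -/
def MatFamConjRel {d : ℕ} (φd : Matrix (Fin d) (Fin d) A → ℂ)
    (P : Matrix (Fin d) (Fin d) A → Prop)
    (Am Xm : Matrix (Fin d) (Fin d) A) (e : Fin 2) : Prop :=
  ∀ (n : ℕ) (Bs : Fin (n + 1) → Matrix (Fin d) (Fin d) A) (i : Fin n → Fin 2),
    (∀ m, P (Bs m)) →
    φd (Xm * interWord Bs fun m => sel Am (i m)) =
      ∑ m : Fin n,
        (if i m = e then
          φd (preWord Bs (fun j => sel Am (i j)) m) *
            φd (sufWord Bs (fun j => sel Am (i j)) m)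
        else 0)

/-- Product of the letters `x * b` of a decorated word. -/
def lprod {T : Type*} [Ring T] (L : List (Bool × T × T)) : T :=
  (L.map fun y => y.2.1 * y.2.2).prod

/-- Recursive form of the right-hand side of the conjugate relations. -/
def dsum {T : Type*} [Ring T] (f g : T → ℂ) : T → List (Bool × T × T) → ℂ
  | _, [] => 0
  | w, y :: L => (if y.1 then f w * g (y.2.2 * lprod L) else 0) + dsum f g (w * (y.2.1 * y.2.2)) L

theorem lprod_nil {T : Type*} [Ring T] : lprod ([] : List (Bool × T × T)) = 1 := rfl

theorem lprod_cons {T : Type*} [Ring T] (y : Bool × T × T) (L : List (Bool × T × T)) :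
    lprod (y :: L) = y.2.1 * y.2.2 * lprod L := by
  simp [lprod]

theorem lprod_ofFn {T : Type*} [Ring T] {n : ℕ} (c : Fin n → Bool) (xs ys : Fin n → T) :
    lprod (List.ofFn fun m => (c m, xs m, ys m)) = (List.ofFn fun m => xs m * ys m).prod := by
  simp [lprod, List.map_ofFn, Function.comp_def]

theorem dsum_ofFn {T : Type*} [Ring T] (f g : T → ℂ) : ∀ {n : ℕ} (c : Fin n → Bool)
    (xs ys : Fin n → T) (w : T),
    dsum f g w (List.ofFn fun m => (c m, xs m, ys m)) =
      ∑ m : Fin n, if c m then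
        f (w * ((List.ofFn fun j => xs j * ys j).take (m : ℕ)).prod) *
        g (ys m * ((List.ofFn fun j => xs j * ys j).drop ((m : ℕ) + 1)).prod) else 0 := by
  intro n
  induction n with
  | zero => intro c xs ys w; simp [dsum]
  | succ n ih =>
    intro c xs ys w
    rw [List.ofFn_succ, dsum, ih (fun m => c m.succ) (fun m => xs m.succ) (fun m => ys m.succ),
      lprod_ofFn (fun m => c m.succ) (fun m => xs m.succ) (fun m => ys m.succ),
      Fin.sum_univ_succ]
    simp [List.ofFn_succ, mul_assoc]

theorem dsum_word {T : Type*} [Ring T] (f g : T → ℂ) {n : ℕ} (c : Fin n → Bool)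
    (xs : Fin n → T) (bs : Fin (n + 1) → T) :
    dsum f g (bs 0) (List.ofFn fun m => (c m, xs m, bs m.succ)) =
      ∑ m : Fin n, if c m then f (preWord bs xs m) * g (sufWord bs xs m) else 0 :=
  dsum_ofFn f g c xs (fun m => bs m.succ) (bs 0)

theorem dsum_add {T : Type*} [Ring T] (f g : T → ℂ) (hf : ∀ x y, f (x + y) = f x + f y)
    (L : List (Bool × T × T)) : ∀ w w' : T,
    dsum f g (w + w') L = dsum f g w L + dsum f g w' L := by
  induction L with
  | nil => intro w w'; simp [dsum]
  | cons y L ih =>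
    intro w w'
    simp only [dsum, add_mul, ih, hf]
    split_ifs <;> ring

/-- Decorate a list of scalar letters. -/
def deco {d : ℕ} (a : Fin d → Fin d → A) (t : Fin d × Fin d × Fin 2)
    (L : List ((Fin d × Fin d × Fin 2) × A)) : List (Bool × A × A) :=
  L.map fun y => (decide (y.1 = t), ent a y.1, y.2)

/-- Conjugate relations for words starting with `w`, with `F` accounting for the letters in `w`. -/
def Good {d : ℕ} (φ : A →ₗ[ℂ] ℂ) (B : StarSubalgebra ℂ A) (a ξ : Fin d → Fin d → A)
    (t : Fin d × Fin d × Fin 2) (w : A) (F : A →ₗ[ℂ] ℂ) : Prop :=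
  ∀ L : List ((Fin d × Fin d × Fin 2) × A), (∀ y ∈ L, y.2 ∈ B) →
    φ (ent ξ t * (w * lprod (deco a t L))) = F (lprod (deco a t L)) + dsum φ φ w (deco a t L)

theorem good_base {d : ℕ} (φ : A →ₗ[ℂ] ℂ) (B : StarSubalgebra ℂ A) (a ξ : Fin d → Fin d → A)
    (h : FamConjRel φ B a ξ) (t : Fin d × Fin d × Fin 2) (b : A) (hb : b ∈ B) :
    Good φ B a ξ t b 0 := by
  intro L hL
  have key := h L.length (Fin.cons b fun m => (L.get m).2) (fun m => (L.get m).1) t (by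
    intro m
    refine Fin.cases ?_ (fun m => ?_) m
    · simpa using hb
    · simpa using hL _ (List.getElem_mem _))
  have e : deco a t L = List.ofFn fun m : Fin L.length =>
      (decide ((L.get m).1 = t), ent a (L.get m).1,
        (Fin.cons b (fun m => (L.get m).2) : Fin (L.length + 1) → A) m.succ) := by
    conv_lhs => rw [deco, ← List.ofFn_get L, List.map_ofFn]
    rfl
  have e2 := dsum_word φ φ (fun m : Fin L.length => decide ((L.get m).1 = t))
    (fun m => ent a (L.get m).1) (Fin.cons b fun m => (L.get m).2)
  rw [← e] at e2
  have e3 := lprod_ofFn (fun m : Fin L.length => decide ((L.get m).1 = t))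
    (fun m => ent a (L.get m).1)
    (fun m => (Fin.cons b (fun m => (L.get m).2) : Fin (L.length + 1) → A) m.succ)
  rw [← e] at e3
  rw [Fin.cons_zero] at e2
  rw [interWord, ← e3, Fin.cons_zero] at key
  rw [key, e2]
  simp

theorem good_zero {d : ℕ} (φ : A →ₗ[ℂ] ℂ) (B : StarSubalgebra ℂ A) (a ξ : Fin d → Fin d → A)
    (t : Fin d × Fin d × Fin 2) : Good φ B a ξ t 0 0 := by
  intro L hL
  have := dsum_add φ φ (map_add φ) (deco a t L) 0 0
  simp only [add_zero] at this
  have h0 : dsum φ φ 0 (deco a t L) = 0 := by simpa using this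
  simp [h0]

theorem good_add {d : ℕ} {φ : A →ₗ[ℂ] ℂ} {B : StarSubalgebra ℂ A} {a ξ : Fin d → Fin d → A}
    {t : Fin d × Fin d × Fin 2} {w w' : A} {F F' : A →ₗ[ℂ] ℂ} (h : Good φ B a ξ t w F)
    (h' : Good φ B a ξ t w' F') : Good φ B a ξ t (w + w') (F + F') := by
  intro L hL
  rw [dsum_add φ φ (map_add φ), add_mul, mul_add, map_add, h L hL, h' L hL, LinearMap.add_apply]
  ring

theorem good_sum {d : ℕ} {φ : A →ₗ[ℂ] ℂ} {B : StarSubalgebra ℂ A} {a ξ : Fin d → Fin d → A}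
    {t : Fin d × Fin d × Fin 2} {ι : Type*} (s : Finset ι) (w : ι → A) (F : ι → A →ₗ[ℂ] ℂ)
    (h : ∀ i, Good φ B a ξ t (w i) (F i)) :
    Good φ B a ξ t (∑ i ∈ s, w i) (∑ i ∈ s, F i) := by
  classical
  induction s using Finset.induction_on with
  | empty => simpa using good_zero φ B a ξ t
  | insert i s hi ih =>
    rw [Finset.sum_insert hi, Finset.sum_insert hi]
    exact good_add (h i) ih

theorem good_step {d : ℕ} {φ : A →ₗ[ℂ] ℂ} {B : StarSubalgebra ℂ A} {a ξ : Fin d → Fin d → A}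
    {t : Fin d × Fin d × Fin 2} {w : A} {F : A →ₗ[ℂ] ℂ} (h : Good φ B a ξ t w F)
    (s : Fin d × Fin d × Fin 2) (b : A) (hb : b ∈ B) :
    Good φ B a ξ t (w * (ent a s * b)) (F ∘ₗ LinearMap.mulLeft ℂ (ent a s * b) +
      (if s = t then φ w else 0) • (φ ∘ₗ LinearMap.mulLeft ℂ b)) := by
  intro L hL
  have := h ((s, b) :: L) (List.forall_mem_cons.2 ⟨hb, hL⟩)
  rw [deco, List.map_cons, lprod_cons, dsum] at this
  rw [mul_assoc w]
  refine this.trans ?_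
  simp only [deco, decide_eq_true_eq, LinearMap.add_apply, LinearMap.comp_apply,
    LinearMap.mulLeft_apply, LinearMap.smul_apply, smul_eq_mul, ite_mul, zero_mul]
  ring

/-- Index triple of the `(k, j)` entry of `A` or its adjoint. -/
def trip {d : ℕ} (i : Fin 2) (k j : Fin d) : Fin d × Fin d × Fin 2 :=
  if i = 0 then (k, j, 0) else (j, k, 1)

theorem trip_eq {d : ℕ} (i e : Fin 2) (k j k' j' : Fin d) :
    trip i k j = trip e k' j' ↔ i = e ∧ k = k' ∧ j = j' := by
  fin_cases i <;> fin_cases e <;> simp [trip]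
  tauto

theorem sel_apply {d : ℕ} (a : Fin d → Fin d → A) (i : Fin 2) (k j : Fin d) :
    sel (Matrix.of a : Matrix (Fin d) (Fin d) A) i k j = ent a (trip i k j) := by
  fin_cases i <;> simp [sel, trip, ent, Matrix.star_apply]

/-- Decorate a list of matrix letters. -/
def mdeco {d : ℕ} (a : Fin d → Fin d → A) (e : Fin 2)
    (L : List (Fin 2 × Matrix (Fin d) (Fin d) A)) :
    List (Bool × Matrix (Fin d) (Fin d) A × Matrix (Fin d) (Fin d) A) :=
  L.map fun y => (decide (y.1 = e), sel (Matrix.of a) y.1, y.2)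

theorem mat_main {d : ℕ} (φ : A →ₗ[ℂ] ℂ) (B : StarSubalgebra ℂ A) (a ξ : Fin d → Fin d → A)
    (e : Fin 2) (k₀ l₀ p q : Fin d) (L : List (Fin 2 × Matrix (Fin d) (Fin d) A)) :
    (∀ y ∈ L, ∀ i j, y.2 i j ∈ B) →
    ∀ (W : Matrix (Fin d) (Fin d) A) (F : Fin d → A →ₗ[ℂ] ℂ),
    (∀ k, Good φ B a ξ (trip e k₀ l₀) (W p k) (F k)) →
    φ (ent ξ (trip e k₀ l₀) * (W * lprod (mdeco a e L)) p q) =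
      ∑ k, F k (lprod (mdeco a e L) k q) +
      dsum (fun M => φ (M p k₀)) (fun M => φ (M l₀ q)) W (mdeco a e L) := by
  induction L with
  | nil =>
    intro _ W F h
    have := h q [] (by simp)
    simp only [deco, List.map_nil, lprod_nil, dsum, mul_one, add_zero] at this
    simp only [mdeco, List.map_nil, lprod_nil, dsum, mul_one, add_zero, this]
    rw [Finset.sum_eq_single q]
    · simp
    · intro b _ hb
      simp [Matrix.one_apply_ne hb]
    · simp
  | cons y L ih =>
    intro hL W F h
    obtain ⟨i, C⟩ := y
    have hC : ∀ j l, C j l ∈ B := hL (i, C) (by simp)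
    have := ih (fun y hy => hL y (by simp [hy])) (W * (sel (Matrix.of a) i * C))
      (fun l => ∑ k, ∑ j, (F k ∘ₗ LinearMap.mulLeft ℂ (ent a (trip i k j) * C j l) +
      (if trip i k j = trip e k₀ l₀ then φ (W p k) else 0) • (φ ∘ₗ LinearMap.mulLeft ℂ (C j l))))
      (by
        intro l
        have e1 : (W * (sel (Matrix.of a) i * C)) p l =
            ∑ k, ∑ j, W p k * (ent a (trip i k j) * C j l) := by
          simp only [Matrix.mul_apply, sel_apply, Finset.mul_sum]
        rw [e1]
        exact good_sum _ _ _ fun k => good_sum _ _ _ fun j => good_step (h k) _ _ (hC j l))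
    have e2 : mdeco a e ((i, C) :: L) = (decide (i = e), sel (Matrix.of a) i, C) :: mdeco a e L :=
      rfl
    rw [e2, lprod_cons, dsum, ← mul_assoc W, this, ← add_assoc]
    congr 1
    generalize lprod (mdeco a e L) = P
    simp only [LinearMap.sum_apply, LinearMap.add_apply, LinearMap.comp_apply,
      LinearMap.mulLeft_apply, LinearMap.smul_apply, smul_eq_mul, Finset.sum_add_distrib]
    congr 1
    · rw [Finset.sum_comm]
      refine Finset.sum_congr rfl fun k _ => ?_
      simp only [Matrix.mul_apply, sel_apply, Finset.sum_mul, map_sum]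
    · simp only [trip_eq, decide_eq_true_eq, Matrix.mul_apply, map_sum]
      by_cases hi : i = e
      · simp only [hi, true_and, if_true, Finset.mul_sum]
        refine Finset.sum_congr rfl fun l _ => ?_
        rw [Finset.sum_eq_single k₀, Finset.sum_eq_single l₀]
        · simp
        · intro j _ hj; simp [hj]
        · simp
        · intro k _ hk; simp [hk]
        · simp
      · simp [hi]

theorem mat_conj {d : ℕ} (φ : A →ₗ[ℂ] ℂ) (B : StarSubalgebra ℂ A) (a ξ : Fin d → Fin d → A)
    (h : FamConjRel φ B a ξ) (e : Fin 2) (Y : Matrix (Fin d) (Fin d) A)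
    (hY : ∀ i j, Y i j = (d : ℂ)⁻¹ • ent ξ (trip e j i)) :
    MatFamConjRel (phid φ) (fun Y => ∀ i j, Y i j ∈ B) (Matrix.of a) Y e := by
  intro n Bs i hB
  have key : ∀ p q, φ (ent ξ (trip e p q) *
      (interWord Bs fun m => sel (Matrix.of a) (i m)) p q) =
      ∑ m : Fin n, if i m = e then
        φ (preWord Bs (fun j => sel (Matrix.of a) (i j)) m p p) *
        φ (sufWord Bs (fun j => sel (Matrix.of a) (i j)) m q q) else 0 := by
    intro p q
    have h1 := mat_main φ B a ξ e p q p q (List.ofFn fun m => (i m, Bs m.succ))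
      (by
        intro y hy
        obtain ⟨m, rfl⟩ := (List.mem_ofFn' _ _).1 hy
        exact hB _)
      (Bs 0) 0 (fun k => good_base φ B a ξ h _ _ (hB 0 p k))
    have e2 : mdeco a e (List.ofFn fun m => (i m, Bs m.succ)) =
        List.ofFn fun m => (decide (i m = e), sel (Matrix.of a) (i m), Bs m.succ) := by
      rw [mdeco, List.map_ofFn]; rfl
    rw [e2, lprod_ofFn (fun m => decide (i m = e)) (fun m => sel (Matrix.of a) (i m))
      (fun m => Bs m.succ), dsum_word _ _ (fun m => decide (i m = e))] at h1
    simpa [interWord] using h1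
  have e3 : ∀ m : Fin n, (if i m = e then
          phid φ (preWord Bs (fun j => sel (Matrix.of a) (i j)) m) *
            phid φ (sufWord Bs (fun j => sel (Matrix.of a) (i j)) m)
        else 0) = (d : ℂ)⁻¹ * (d : ℂ)⁻¹ * ∑ q, ∑ p, if i m = e then
        φ (preWord Bs (fun j => sel (Matrix.of a) (i j)) m p p) *
        φ (sufWord Bs (fun j => sel (Matrix.of a) (i j)) m q q) else 0 := by
    intro m
    split_ifs
    · simp only [phid, ← Finset.sum_mul, ← Finset.mul_sum, div_eq_mul_inv]
      ring
    · simp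
  rw [Finset.sum_congr rfl fun m _ => e3 m, ← Finset.mul_sum, Finset.sum_comm]
  simp only [phid, Matrix.mul_apply, hY, map_sum, smul_mul_assoc, map_smul, key, smul_eq_mul,
    ← Finset.mul_sum, div_eq_mul_inv]
  rw [Finset.sum_congr rfl fun q _ => Finset.sum_comm]
  ring

/-- Forward direction of Proposition 4.1, 1°: if `{ξ_ij, ξ_ij*}` fulfills the conjugate
relations for `{a_ij, a_ij*}` with respect to `ℬ`, then `X = (1/d)(ξ_ji)_{ij}` is such that
`{X, X*}` fulfills the conjugate relations for `{A, A*}` with respect to `M_d(ℬ)`, and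
`φ_d(X*X) + φ_d(XX*) = d⁻³ Σ_{ij} (φ(ξ_ij*ξ_ij) + φ(ξ_ij ξ_ij*))`. -/
theorem matrix_conjugate_system_of_entry_conjugate_system
    {d : ℕ} (hd : 0 < d)
    (φ : A →ₗ[ℂ] ℂ)
    (hφ1 : φ 1 = 1)
    (hφpos : ∀ x : A, 0 ≤ φ (star x * x))
    (hφtr : ∀ x y : A, φ (x * y) = φ (y * x))
    (B : StarSubalgebra ℂ A)
    (a ξ : Fin d → Fin d → A)
    (hconj : FamConjRel φ B a ξ) :
    let Am : Matrix (Fin d) (Fin d) A := Matrix.of a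
    let Xm : Matrix (Fin d) (Fin d) A := Matrix.of fun i j => (d : ℂ)⁻¹ • ξ j i
    MatFamConjRel (phid φ) (fun Y => ∀ i j, Y i j ∈ B) Am Xm 0 ∧
    MatFamConjRel (phid φ) (fun Y => ∀ i j, Y i j ∈ B) Am (star Xm) 1 ∧
    phid φ (star Xm * Xm) + phid φ (Xm * star Xm) =
      ((d : ℂ) ^ 3)⁻¹ *
        ∑ i : Fin d, ∑ j : Fin d,
          (φ (star (ξ i j) * ξ i j) + φ (ξ i j * star (ξ i j))) := by
  intro Am Xm
  refine ⟨mat_conj φ B a ξ hconj 0 Xm fun i j => ?_,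
    mat_conj φ B a ξ hconj 1 (star Xm) fun i j => ?_, ?_⟩
  · simp [Xm, trip, ent]
  · simp [Xm, trip, ent, Matrix.star_apply]
  · simp only [phid, Matrix.mul_apply, Matrix.star_apply, Xm, Matrix.of_apply, map_sum, star_smul,
      smul_mul_assoc, mul_smul_comm, map_smul, smul_eq_mul, ← Finset.mul_sum,
      Finset.sum_add_distrib, star_inv₀, star_natCast]
    rw [Finset.sum_comm (f := fun i j => φ (ξ j i * star (ξ j i)))]
    ring
end
end

section
/- Let ℬ ⊆ 𝒜 be a unital *-subalgebra, d ≥ 1, a_ij ∈ 𝒜 (1 ≤ i, j ≤ d), A := (a_ij) ∈ M_d(𝒜), and let X ∈ M_d(𝒜) be such that {X, X*} fulfills the conjugate relations for {A, A*} with respect to M_d(ℬ): writing A₁ := A, A₂ := A*, for all n ≥ 0, B₀, …, Bₙ ∈ M_d(ℬ) and i₁, …, iₙ ∈ {1,2}: φ_d(X B₀ A_{i₁} B₁ ⋯ A_{iₙ} Bₙ) = Σ_{m=1}^{n} δ_{iₘ,1} φ_d(B₀ A_{i₁} ⋯ A_{i_{m−1}} B_{m−1}) φ_d(Bₘ A_{i_{m+1}}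 ⋯ A_{iₙ} Bₙ), and the analogous relations hold with X* and δ_{iₘ,2}. Define ξ_ij := d·X_{ji} (1 ≤ i, j ≤ d). Then the family {ξ_ij, ξ_ij*} fulfills the conjugate relations for {a_ij, a_ij*} with respect to ℬ: writing x^{(1)} := x and x^{(2)} := x*, for all n ≥ 0, b₀, …, bₙ ∈ ℬ and index triples (k, l, ε), (k₁, l₁, ε₁), …, (kₙ, lₙ, εₙ): φ( ξ_{kl}^{(ε)} b₀ a_{k₁l₁}^{(ε₁)} b₁ ⋯ a_{kₙlₙ}^{(εₙ)} bₙ ) = Σ_{m=1}^{n} [ (k, l, ε) = (kₘ, lₘ, εₘ) ] φ(b₀ ⋯ b_{m−1}) φ(bₘ ⋯ bₙ), with the evident partial products. (Converse direction of Proposition 4.1, 1°.) -/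
open scoped BigOperators
open ComplexOrder

noncomputable section

variable {A : Type*} [Ring A] [Algebra ℂ A] [StarRing A] [StarModule ℂ A]

open Matrix in
theorem aux_single_step {d : ℕ} {T : Type*} [Ring T] (i j k l : Fin d) (M : Matrix (Fin d) (Fin d) T)
    (b b' : T) :
    single i j b * (M * single k l b') = single i l (b * (M j k * b')) := by
  rw [← mul_assoc, single_mul_mul_single, mul_assoc]

open Matrix in
theorem aux_pre {d n : ℕ} {T : Type*} [Ring T] (r c : Fin (n + 1) → Fin d)
    (bs : Fin (n + 1) → T) (xs : Fin n → T) (Ms : Fin n → Matrix (Fin d) (Fin d) T)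
    (h : ∀ m : Fin n, Ms m (c m.castSucc) (r m.succ) = xs m) (m : ℕ) (hm : m < n + 1) :
    single (r 0) (c 0) (bs 0) *
      ((List.ofFn fun j : Fin n => Ms j * single (r j.succ) (c j.succ) (bs j.succ)).take m).prod
    = single (r 0) (c ⟨m, hm⟩)
      (bs 0 * ((List.ofFn fun j : Fin n => xs j * bs j.succ).take m).prod) := by
  induction m with
  | zero => simp
  | succ m ih =>
    rw [List.prod_take_succ _ _ (by simp; omega), List.prod_take_succ _ _ (by simp; omega),
      ← mul_assoc, ih (by omega)]
    simp only [List.getElem_ofFn]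
    rw [aux_single_step, ← h ⟨m, by omega⟩, ← mul_assoc (bs 0)]
    rfl

open Matrix in
theorem aux_suf {d n : ℕ} {T : Type*} [Ring T] (r c : Fin (n + 1) → Fin d)
    (bs : Fin (n + 1) → T) (xs : Fin n → T) (Ms : Fin n → Matrix (Fin d) (Fin d) T)
    (h : ∀ m : Fin n, Ms m (c m.castSucc) (r m.succ) = xs m) (k m : ℕ) (hm : m < n + 1)
    (hk : m + k = n) :
    single (r ⟨m, hm⟩) (c ⟨m, hm⟩) (bs ⟨m, hm⟩) *
      ((List.ofFn fun j : Fin n => Ms j * single (r j.succ) (c j.succ) (bs j.succ)).drop m).prod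
    = single (r ⟨m, hm⟩) (c (Fin.last n))
      (bs ⟨m, hm⟩ * ((List.ofFn fun j : Fin n => xs j * bs j.succ).drop m).prod) := by
  induction k generalizing m with
  | zero =>
    obtain rfl : m = n := by omega
    rw [List.drop_eq_nil_of_le (by simp), List.drop_eq_nil_of_le (by simp)]
    simp [Fin.last]
  | succ k ih =>
    rw [List.drop_eq_getElem_cons (i := m)
        (l := List.ofFn fun j : Fin n => Ms j * single (r j.succ) (c j.succ) (bs j.succ))
        (by simp; omega),
      List.drop_eq_getElem_cons (i := m)
        (l := List.ofFn fun j : Fin n => xs j * bs j.succ) (by simp; omega)]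
    simp only [List.getElem_ofFn, List.prod_cons]
    have := ih (m + 1) (by omega) (by omega)
    simp only [Fin.succ_mk, mul_assoc]
    rw [this, aux_single_step, ← h ⟨m, by omega⟩]
    rfl

open Matrix in
theorem aux_phid_mul_single {d : ℕ} (φ : A →ₗ[ℂ] ℂ) (Z : Matrix (Fin d) (Fin d) A)
    (p q : Fin d) (w : A) : phid φ (Z * single p q w) = φ (Z q p * w) / d := by
  unfold phid
  congr 1
  rw [Finset.sum_eq_single q]
  · simp
  · intro b _ hb
    rw [Matrix.mul_single_apply_of_ne (hbj := hb)]
    simp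
  · simp

open Matrix in
theorem aux_phid_single {d : ℕ} (φ : A →ₗ[ℂ] ℂ)
    (p q : Fin d) (w : A) : phid φ (single p q w) = if p = q then φ w / d else 0 := by
  have := aux_phid_mul_single φ 1 p q w
  rw [one_mul] at this
  rw [this]
  by_cases h : p = q
  · subst h
    simp [Matrix.one_apply_eq]
  · simp [h, Matrix.one_apply_ne (Ne.symm h)]

/-- Row of the matrix entry given by an index triple. -/
def rowIx {d : ℕ} (t : Fin d × Fin d × Fin 2) : Fin d := if t.2.2 = 0 then t.1 else t.2.1

/-- Column of the matrix entry given by an index triple. -/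
def colIx {d : ℕ} (t : Fin d × Fin d × Fin 2) : Fin d := if t.2.2 = 0 then t.2.1 else t.1

theorem aux_idx {d : ℕ} (s t : Fin d × Fin d × Fin 2) :
    s = t ↔ s.2.2 = t.2.2 ∧ rowIx t = rowIx s ∧ colIx s = colIx t := by
  obtain ⟨a, b, e⟩ := s
  obtain ⟨a', b', e'⟩ := t
  simp only [rowIx, colIx, Prod.mk.injEq]
  constructor
  · rintro ⟨rfl, rfl, rfl⟩
    simp
  · rintro ⟨rfl, h1, h2⟩
    split_ifs at h1 h2 <;> simp [h1, h2]

theorem aux_main {d : ℕ} (hd : 0 < d) (φ : A →ₗ[ℂ] ℂ) (B : StarSubalgebra ℂ A)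
    (a : Fin d → Fin d → A) (Z : Matrix (Fin d) (Fin d) A) (t : Fin d × Fin d × Fin 2)
    (hZ : MatFamConjRel (phid φ) (fun Y => ∀ i j, Y i j ∈ B) (Matrix.of a) Z t.2.2)
    (n : ℕ) (bs : Fin (n + 1) → A) (idx : Fin n → Fin d × Fin d × Fin 2)
    (hbs : ∀ m, bs m ∈ B) :
    φ (((d : ℂ) • Z (colIx t) (rowIx t)) * interWord bs fun m => ent a (idx m)) =
      ∑ m : Fin n,
        (if idx m = t then
          φ (preWord bs (fun j => ent a (idx j)) m) *
            φ (sufWord bs (fun j => ent a (idx j)) m)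
        else 0) := by
  have hd' : (d : ℂ) ≠ 0 := by exact_mod_cast hd.ne'
  let r : Fin (n + 1) → Fin d := Fin.cons (rowIx t) fun m => colIx (idx m)
  let c : Fin (n + 1) → Fin d := Fin.snoc (fun m => rowIx (idx m)) (colIx t)
  have hr0 : r 0 = rowIx t := rfl
  have hrs : ∀ m : Fin n, r m.succ = colIx (idx m) := fun m => rfl
  have hcl : c (Fin.last n) = colIx t := by simp [c]
  have hcs : ∀ m : Fin n, c m.castSucc = rowIx (idx m) := fun m => by simp [c]
  have h : ∀ m : Fin n, (sel (Matrix.of a) (idx m).2.2) (c m.castSucc) (r m.succ)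
      = ent a (idx m) := by
    intro m
    rw [hcs, hrs]
    unfold sel ent rowIx colIx
    split_ifs <;> simp [Matrix.star_apply]
  have key := hZ n (fun m => Matrix.single (r m) (c m) (bs m)) (fun m => (idx m).2.2) (by
    intro m i j
    simp only [Matrix.single_apply]
    split_ifs
    · exact hbs m
    · exact B.zero_mem)
  have hI : interWord (fun m => Matrix.single (r m) (c m) (bs m))
      (fun m => sel (Matrix.of a) (idx m).2.2)
      = Matrix.single (rowIx t) (colIx t) (interWord bs fun m => ent a (idx m)) := by
    have := aux_suf r c bs _ _ h n 0 (by omega) (by omega)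
    rw [hcl] at this
    exact this
  have hP : ∀ m : Fin n, preWord (fun m => Matrix.single (r m) (c m) (bs m))
      (fun m => sel (Matrix.of a) (idx m).2.2) m
      = Matrix.single (rowIx t) (rowIx (idx m)) (preWord bs (fun m => ent a (idx m)) m) := by
    intro m
    have := aux_pre r c bs _ _ h m (by omega)
    rw [← hcs]
    exact this
  have hS : ∀ m : Fin n, sufWord (fun m => Matrix.single (r m) (c m) (bs m))
      (fun m => sel (Matrix.of a) (idx m).2.2) m
      = Matrix.single (colIx (idx m)) (colIx t) (sufWord bs (fun m => ent a (idx m)) m) := by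
    intro m
    have := aux_suf r c bs _ _ h (n - (m + 1)) (m + 1) (by omega) (by omega)
    rw [hcl] at this
    exact this
  rw [hI, aux_phid_mul_single] at key
  simp only [hP, hS, aux_phid_single] at key
  rw [smul_mul_assoc, map_smul, smul_eq_mul, ← div_mul_cancel₀ (φ _) hd', key, Finset.sum_mul,
    Finset.mul_sum]
  refine Finset.sum_congr rfl fun m _ => ?_
  by_cases h1 : (idx m).2.2 = t.2.2 <;> by_cases h2 : rowIx t = rowIx (idx m) <;>
    by_cases h3 : colIx (idx m) = colIx t <;> simp [aux_idx (idx m) t, h1, h2, h3]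
  field_simp

/-- Converse direction of Proposition 4.1, 1°: if `{X, X*}` fulfills the conjugate
relations for `{A, A*}` with respect to `M_d(ℬ)`, then `ξ_ij := d·X_ji` gives a family
`{ξ_ij, ξ_ij*}` fulfilling the conjugate relations for `{a_ij, a_ij*}` w.r.t. `ℬ`. -/
theorem entry_conjugate_system_of_matrix_conjugate_system
    {d : ℕ} (hd : 0 < d)
    (φ : A →ₗ[ℂ] ℂ)
    (hφ1 : φ 1 = 1)
    (hφpos : ∀ x : A, 0 ≤ φ (star x * x))
    (hφtr : ∀ x y : A, φ (x * y) = φ (y * x))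
    (B : StarSubalgebra ℂ A)
    (a : Fin d → Fin d → A)
    (X : Matrix (Fin d) (Fin d) A)
    (hX : MatFamConjRel (phid φ) (fun Y => ∀ i j, Y i j ∈ B) (Matrix.of a) X 0)
    (hXstar : MatFamConjRel (phid φ) (fun Y => ∀ i j, Y i j ∈ B) (Matrix.of a) (star X) 1) :
    FamConjRel φ B a (fun i j => (d : ℂ) • X j i) := by
  intro n bs idx t hbs
  by_cases ht : t.2.2 = 0
  · rw [← aux_main hd φ B a X t (ht ▸ hX) n bs idx hbs]
    simp [ent, rowIx, colIx, ht]
  · have ht1 : t.2.2 = 1 := by omega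
    rw [← aux_main hd φ B a (star X) t (ht1 ▸ hXstar) n bs idx hbs]
    simp [ent, rowIx, colIx, ht, Matrix.star_apply]
end
end

section
/- Let ℬ ⊆ 𝒜 be a unital *-subalgebra, d ≥ 1, and let g_ij ∈ 𝒜 (1 ≤ i, j ≤ d) satisfy g_ij* = g_ji, so that G := (g_ij) ∈ M_d(𝒜) is self-adjoint. Suppose ξ_ij ∈ 𝒜 with ξ_ij* = ξ_ji fulfill the conjugate relations for the self-adjoint family {g_ij} with respect to ℬ: for all n ≥ 0, all b₀, …, bₙ ∈ ℬ and all pairs (k, l), (k₁, l₁), …, (kₙ, lₙ): φ( ξ_{kl} b₀ g_{k₁l₁} b₁ ⋯ g_{kₙlₙ} bₙ ) = Σ_{m=1}^{n} δ_{(k,l),(kₘ,lₘ)} φ(b₀ g_{k₁l₁} ⋯ g_{k_{m−1}l_{m−1}} b_{m−1}) φ(bₘ g_{k_{m+1}l_{m+1}} ⋯ g_{kₙlₙ} bₙ). Then X := (1/d)·(ξ_ji)_{i,j} ∈ M_d(𝒜) fulfills the conjugate relations for G with respect to M_d(ℬ): for all n ≥ 0 and B₀, …, Bₙ ∈ M_d(ℬ),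 φ_d(X B₀ G B₁ ⋯ G Bₙ) = Σ_{m=1}^{n} φ_d(B₀ G ⋯ G B_{m−1}) φ_d(Bₘ G ⋯ G Bₙ). Moreover φ_d(X*X) = d^{−3} Σ_{i,j=1}^{d} φ(ξ_ij* ξ_ij). (Proposition 4.1, 2°, yielding Φ*({g_ij} : ℬ) = d³ Φ*(G : M_d(ℬ)).) -/
open scoped BigOperators
open ComplexOrder

noncomputable section

variable {A : Type*} [Ring A] [Algebra ℂ A] [StarRing A] [StarModule ℂ A]

/-- product of the scalar letters `g s * b`. -/
def wordP {d : ℕ} (g : Fin d → Fin d → A) (l : List ((Fin d × Fin d) × A)) : A :=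
  (l.map fun s => g s.1.1 s.1.2 * s.2).prod

/-- Scalar difference quotient sum. -/
def dSc {d : ℕ} (φ : A →ₗ[ℂ] ℂ) (g : Fin d → Fin d → A) (t : Fin d × Fin d) :
    A → List ((Fin d × Fin d) × A) → A → ℂ
  | _, [], _ => 0
  | pre, s :: l, W =>
      (if s.1 = t then φ pre * φ (s.2 * wordP g l * W) else 0) +
        dSc φ g t (pre * (g s.1.1 s.1.2 * s.2)) l W

/-- product of the matrix letters `G * B`. -/
def wordM {d : ℕ} (G : Matrix (Fin d) (Fin d) A) (L : List (Matrix (Fin d) (Fin d) A)) :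
    Matrix (Fin d) (Fin d) A :=
  (L.map fun b => G * b).prod

/-- Matrix difference quotient sum. -/
def dMat {d : ℕ} (φ : A →ₗ[ℂ] ℂ) (G : Matrix (Fin d) (Fin d) A) (t : Fin d × Fin d) (i : Fin d) :
    (Fin d → A) → List (Matrix (Fin d) (Fin d) A) → ℂ
  | _, [] => 0
  | v, b :: L =>
      φ (v t.1) * φ ((b * wordM G L) t.2 i) + dMat φ G t i (Matrix.vecMul v (G * b)) L

lemma dSc_sum {d : ℕ} (φ : A →ₗ[ℂ] ℂ) (g : Fin d → Fin d → A) (t : Fin d × Fin d)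
    {ι : Type*} (S : Finset ι) (W : ι → A) (l : List ((Fin d × Fin d) × A)) :
    ∀ pre : A, dSc φ g t pre l (∑ k ∈ S, W k) = ∑ k ∈ S, dSc φ g t pre l (W k) := by
  induction l with
  | nil => intro pre; simp [dSc]
  | cons s l ih =>
    intro pre
    simp only [dSc, ih, Finset.sum_add_distrib]
    congr 1
    split_ifs
    · rw [Finset.mul_sum, map_sum, Finset.mul_sum]
    · simp

lemma dSc_append {d : ℕ} (φ : A →ₗ[ℂ] ℂ) (g : Fin d → Fin d → A) (t : Fin d × Fin d)
    (s : (Fin d × Fin d) × A) (W : A) (l : List ((Fin d × Fin d) × A)) :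
    ∀ pre : A, dSc φ g t pre (l ++ [s]) W = dSc φ g t pre l (g s.1.1 s.1.2 * s.2 * W) +
      if s.1 = t then φ (pre * wordP g l) * φ (s.2 * W) else 0 := by
  induction l with
  | nil => intro pre; simp [dSc, wordP]
  | cons a l ih =>
    intro pre
    simp only [dSc, ih, List.cons_append]
    simp [wordP, mul_assoc, add_assoc]

lemma dMat_sum {d : ℕ} (φ : A →ₗ[ℂ] ℂ) (G : Matrix (Fin d) (Fin d) A) (t : Fin d × Fin d)
    (i : Fin d) {ι : Type*} (S : Finset ι) (L : List (Matrix (Fin d) (Fin d) A)) :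
    ∀ v : ι → Fin d → A, dMat φ G t i (∑ k ∈ S, v k) L = ∑ k ∈ S, dMat φ G t i (v k) L := by
  induction L with
  | nil => intro v; simp [dMat]
  | cons b L ih =>
    intro v
    simp only [dMat, Finset.sum_add_distrib, ← ih, Finset.sum_apply, map_sum, Finset.sum_mul]
    congr 2
    ext k
    simp only [Matrix.vecMul, dotProduct, Finset.sum_apply, Finset.sum_mul]
    rw [Finset.sum_comm]

lemma dSc_ofFn {d : ℕ} (φ : A →ₗ[ℂ] ℂ) (g : Fin d → Fin d → A) (t : Fin d × Fin d) (n : ℕ) :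
    ∀ (f : Fin n → (Fin d × Fin d) × A) (pre : A), dSc φ g t pre (List.ofFn f) 1 =
      ∑ m : Fin n, if (f m).1 = t then
        φ (pre * ((List.ofFn fun j => g (f j).1.1 (f j).1.2 * (f j).2).take (m : ℕ)).prod) *
        φ ((f m).2 * ((List.ofFn fun j => g (f j).1.1 (f j).1.2 * (f j).2).drop ((m : ℕ) + 1)).prod)
        else 0 := by
  induction n with
  | zero => intro f pre; simp [dSc]
  | succ n ih =>
    intro f pre
    rw [List.ofFn_succ, dSc, ih, Fin.sum_univ_succ]
    simp [wordP, List.map_ofFn, Function.comp_def, List.ofFn_succ, mul_assoc]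

lemma dMat_ofFn {d : ℕ} (φ : A →ₗ[ℂ] ℂ) (G : Matrix (Fin d) (Fin d) A) (t : Fin d × Fin d)
    (i : Fin d) (n : ℕ) :
    ∀ (f : Fin n → Matrix (Fin d) (Fin d) A) (v : Fin d → A), dMat φ G t i v (List.ofFn f) =
      ∑ m : Fin n,
        φ (Matrix.vecMul v ((List.ofFn fun j => G * f j).take (m : ℕ)).prod t.1) *
        φ ((f m * ((List.ofFn fun j => G * f j).drop ((m : ℕ) + 1)).prod) t.2 i) := by
  induction n with
  | zero => intro f v; simp [dMat]
  | succ n ih =>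
    intro f v
    rw [List.ofFn_succ, dMat, ih, Fin.sum_univ_succ]
    simp [wordM, List.map_ofFn, Function.comp_def, List.ofFn_succ, Matrix.vecMul_vecMul]

lemma main_list {d : ℕ} (φ : A →ₗ[ℂ] ℂ) (B : StarSubalgebra ℂ A)
    (g ξ : Fin d → Fin d → A)
    (hconj : ∀ (n : ℕ) (bs : Fin (n + 1) → A) (idx : Fin n → Fin d × Fin d)
        (t : Fin d × Fin d),
      (∀ m, bs m ∈ B) →
      φ (ξ t.1 t.2 * interWord bs fun m => g (idx m).1 (idx m).2) =
        ∑ m : Fin n,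
          (if idx m = t then
            φ (preWord bs (fun j => g (idx j).1 (idx j).2) m) *
              φ (sufWord bs (fun j => g (idx j).1 (idx j).2) m)
          else 0))
    (t : Fin d × Fin d) (b0 : A) (hb0 : b0 ∈ B) (l : List ((Fin d × Fin d) × A))
    (hl : ∀ s ∈ l, s.2 ∈ B) :
    φ (ξ t.1 t.2 * (b0 * wordP g l)) = dSc φ g t b0 l 1 := by
  obtain ⟨n, f, rfl⟩ : ∃ (n : ℕ) (f : Fin n → (Fin d × Fin d) × A), l = List.ofFn f :=
    ⟨_, l.get, (List.ofFn_get l).symm⟩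
  have h := hconj n (Fin.cons b0 fun m => (f m).2) (fun m => (f m).1) t (by
    intro m
    refine Fin.cases ?_ (fun m => ?_) m
    · simpa using hb0
    · simpa using hl (f m) (by simp [List.mem_ofFn]))
  rw [dSc_ofFn]
  simpa [interWord, preWord, sufWord, wordP, List.map_ofFn, Function.comp_def] using h

lemma main_mat {d : ℕ} (φ : A →ₗ[ℂ] ℂ) (B : StarSubalgebra ℂ A)
    (g ξ : Fin d → Fin d → A) (t : Fin d × Fin d)
    (h : ∀ (b0 : A), b0 ∈ B → ∀ (l : List ((Fin d × Fin d) × A)), (∀ s ∈ l, s.2 ∈ B) →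
      φ (ξ t.1 t.2 * (b0 * wordP g l)) = dSc φ g t b0 l 1)
    (i : Fin d) (L : List (Matrix (Fin d) (Fin d) A)) (hL : ∀ b ∈ L, ∀ i j, b i j ∈ B) :
    ∀ (b0 : A), b0 ∈ B → ∀ (l : List ((Fin d × Fin d) × A)), (∀ s ∈ l, s.2 ∈ B) → ∀ r : Fin d,
      φ (ξ t.1 t.2 * (b0 * wordP g l * wordM (Matrix.of g) L r i)) =
        dSc φ g t b0 l (wordM (Matrix.of g) L r i) +
        dMat φ (Matrix.of g) t i (Pi.single r (b0 * wordP g l)) L := by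
  induction L with
  | nil =>
    intro b0 hb0 l hl r
    by_cases hr : r = i
    · subst hr
      simp [wordM, dMat, h b0 hb0 l hl]
    · have := dSc_sum φ g t (∅ : Finset ℕ) (fun _ => 0) l b0
      simp only [Finset.sum_empty] at this
      simp [wordM, dMat, Matrix.one_apply_ne hr, this]
  | cons b L ih =>
    intro b0 hb0 l hl r
    have hb : ∀ i j, b i j ∈ B := hL b (by simp)
    have ih' := ih (fun b hb => hL b (by simp [hb]))
    have hW : wordM (Matrix.of g) (b :: L) r i =
        ∑ p, ∑ q, g r p * b p q * wordM (Matrix.of g) L q i := by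
      have : wordM (Matrix.of g) (b :: L) = Matrix.of g * (b * wordM (Matrix.of g) L) := by
        simp [wordM, mul_assoc]
      rw [this]
      simp [Matrix.mul_apply, Finset.mul_sum, mul_assoc]
    have key : ∀ p q, φ (ξ t.1 t.2 * (b0 * wordP g l * (g r p * b p q * wordM (Matrix.of g) L q i)))
        = dSc φ g t b0 l (g r p * b p q * wordM (Matrix.of g) L q i) +
          (if (r, p) = t then φ (b0 * wordP g l) * φ (b p q * wordM (Matrix.of g) L q i) else 0) +
          dMat φ (Matrix.of g) t i (Pi.single q (b0 * wordP g l * (g r p * b p q))) L := by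
      intro p q
      have := ih' b0 hb0 (l ++ [((r, p), b p q)]) (by
        intro s hs
        rcases List.mem_append.1 hs with hs | hs
        · exact hl s hs
        · simp only [List.mem_singleton] at hs
          subst hs
          exact hb p q) q
      rw [dSc_append] at this
      have hw : wordP g (l ++ [((r, p), b p q)]) = wordP g l * (g r p * b p q) := by
        simp [wordP]
      rw [hw] at this
      simpa only [mul_assoc] using this
    rw [hW]
    simp only [Finset.mul_sum, map_sum, key, dSc_sum, dMat, Finset.sum_add_distrib, add_assoc]
    congr 1
    congr 1
    · simp only [Matrix.mul_apply, map_sum, Finset.mul_sum]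
      rw [Finset.sum_comm]
      refine Finset.sum_congr rfl fun q _ => ?_
      obtain ⟨t1, t2⟩ := t
      by_cases hr : r = t1
      · subst hr
        simp
      · simp [hr, Pi.single_eq_of_ne (Ne.symm hr)]
    · simp only [← dMat_sum]
      congr 1
      ext k
      simp only [Finset.sum_apply, Matrix.single_vecMul, Matrix.mul_apply, Pi.single_apply]
      simp [Finset.mul_sum, Matrix.mul_apply]

/-- Proposition 4.1, 2°: if the family `{ξ_ij}` (with `ξ_ij* = ξ_ji`) fulfills the
conjugate relations for the self-adjoint family `{g_ij}` (with `g_ij* = g_ji`) w.r.t. `ℬ`,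
then `X = (1/d)(ξ_ji)_{ij}` fulfills the conjugate relations for `G = (g_ij)` w.r.t.
`M_d(ℬ)`, and `φ_d(X*X) = d⁻³ Σ_{ij} φ(ξ_ij* ξ_ij)`. -/
theorem selfadjoint_matrix_conjugate_of_entry_conjugate
    {d : ℕ} (hd : 0 < d)
    (φ : A →ₗ[ℂ] ℂ)
    (hφ1 : φ 1 = 1)
    (hφpos : ∀ x : A, 0 ≤ φ (star x * x))
    (hφtr : ∀ x y : A, φ (x * y) = φ (y * x))
    (B : StarSubalgebra ℂ A)
    (g ξ : Fin d → Fin d → A)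
    (hg : ∀ i j, star (g i j) = g j i)
    (hξ : ∀ i j, star (ξ i j) = ξ j i)
    (hconj : ∀ (n : ℕ) (bs : Fin (n + 1) → A) (idx : Fin n → Fin d × Fin d)
        (t : Fin d × Fin d),
      (∀ m, bs m ∈ B) →
      φ (ξ t.1 t.2 * interWord bs fun m => g (idx m).1 (idx m).2) =
        ∑ m : Fin n,
          (if idx m = t then
            φ (preWord bs (fun j => g (idx j).1 (idx j).2) m) *
              φ (sufWord bs (fun j => g (idx j).1 (idx j).2) m)
          else 0)) :
    let G : Matrix (Fin d) (Fin d) A := Matrix.of g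
    let Xm : Matrix (Fin d) (Fin d) A := Matrix.of fun i j => (d : ℂ)⁻¹ • ξ j i
    (∀ (n : ℕ) (Bs : Fin (n + 1) → Matrix (Fin d) (Fin d) A),
      (∀ m, ∀ i j, Bs m i j ∈ B) →
      phid φ (Xm * interWord Bs fun _ => G) =
        ∑ m : Fin n,
          phid φ (preWord Bs (fun _ => G) m) * phid φ (sufWord Bs (fun _ => G) m)) ∧
    phid φ (star Xm * Xm) =
      ((d : ℂ) ^ 3)⁻¹ * ∑ i : Fin d, ∑ j : Fin d, φ (star (ξ i j) * ξ i j) := by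
  intro G Xm
  have hd0 : (d : ℂ) ≠ 0 := by exact_mod_cast hd.ne'
  refine ⟨?_, ?_⟩
  · intro n Bs hBs
    have hw : (List.ofFn fun m : Fin n => G * Bs m.succ).prod =
        wordM G (List.ofFn fun m : Fin n => Bs m.succ) := by
      simp [wordM, List.map_ofFn, Function.comp_def]
    have key : ∀ i j, φ (ξ j i * interWord Bs (fun _ => G) j i) =
        ∑ m : Fin n, φ (preWord Bs (fun _ => G) m j j) * φ (sufWord Bs (fun _ => G) m i i) := by
      intro i j
      have h1 : ∀ r, φ (ξ j i * (Bs 0 j r * wordM G (List.ofFn fun m : Fin n => Bs m.succ) r i)) =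
          dMat φ G (j, i) i (Pi.single r (Bs 0 j r)) (List.ofFn fun m : Fin n => Bs m.succ) := by
        intro r
        have := main_mat φ B g ξ (j, i)
          (fun b0 hb0 l hl => main_list φ B g ξ hconj (j, i) b0 hb0 l hl) i
          (List.ofFn fun m : Fin n => Bs m.succ)
          (by
            intro b hb
            obtain ⟨m, rfl⟩ := List.mem_ofFn.1 hb
            exact hBs _) (Bs 0 j r) (hBs _ _ _) [] (by simp) r
        simpa [dSc, wordP] using this
      rw [interWord, hw, Matrix.mul_apply, Finset.mul_sum, map_sum]
      simp only [h1]
      rw [← dMat_sum, dMat_ofFn]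
      have hs : (∑ r, Pi.single r (Bs 0 j r) : Fin d → A) = Bs 0 j := by
        simpa using Finset.univ_sum_single (Bs 0 j)
      rw [hs]
      refine Finset.sum_congr rfl fun m _ => ?_
      simp only [preWord, sufWord]
      rfl
    have hL : phid φ (Xm * interWord Bs fun _ => G) =
        (d : ℂ)⁻¹ * (∑ i, ∑ j, φ (ξ j i * interWord Bs (fun _ => G) j i)) / d := by
      simp [phid, Xm, Matrix.mul_apply, Finset.mul_sum]
    rw [hL]
    simp only [key, phid]
    have : (∑ i : Fin d, ∑ j : Fin d, ∑ m : Fin n,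
        φ (preWord Bs (fun _ => G) m j j) * φ (sufWord Bs (fun _ => G) m i i)) =
        ∑ m : Fin n, (∑ j, φ (preWord Bs (fun _ => G) m j j)) *
          ∑ i, φ (sufWord Bs (fun _ => G) m i i) := by
      simp only [Finset.sum_mul_sum]
      rw [Finset.sum_comm, Finset.sum_comm' (t' := Finset.univ) (s' := fun _ => Finset.univ) (by simp)]
      rw [Finset.sum_comm]
      rw [Finset.sum_comm]
      simp only [Finset.sum_comm (s := (Finset.univ : Finset (Fin d))) (t := (Finset.univ : Finset (Fin n)))]
      refine Finset.sum_congr rfl fun m _ => ?_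
      rw [Finset.sum_comm]
    rw [this, Finset.mul_sum, Finset.sum_div]
    refine Finset.sum_congr rfl fun m _ => ?_
    field_simp
  · have : phid φ (star Xm * Xm) = (d : ℂ)⁻¹ * ((d : ℂ)⁻¹ *
        ∑ i : Fin d, ∑ j : Fin d, φ (star (ξ i j) * ξ i j)) / d := by
      simp [phid, Xm, Matrix.mul_apply, Finset.mul_sum, Matrix.star_apply, star_smul]
    rw [this]
    field_simp
end
end
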